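/- arXiv:1706.04935 — 2 statements merged into one kernel-verified Lean document; each statement's English description precedes it below -/
import Mathlib

section
/- For every permutation w ∈ S_n, the support of the Schubert polynomial 𝔖_w equals { ξ^C : C = (C_1,...,C_n), C_j ≤ D(w)_j for all j ∈ [n] }, where D(w)_j are the columns of the Rothe diagram of w and ξ^C_i = #{ j : i ∈ C_j }. -/
open Finset MvPolynomial

/-- `DomLE R S`: `R` and `S` have the same cardinality and, for each `k`, the `k`-th least
element of `R` does not exceed the `k`-th least element of `S`.  The bases of the Schubert
matroid `SM_n(S)` are exactly the `B` with `DomLE B S`. -/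
def DomLE {α : Type*} [LinearOrder α] (R S : Finset α) : Prop :=
  R.card = S.card ∧
    ∀ (k : ℕ) (hR : k < (R.sort (· ≤ ·)).length) (hS : k < (S.sort (· ≤ ·)).length),
      (R.sort (· ≤ ·)).get ⟨k, hR⟩ ≤ (S.sort (· ≤ ·)).get ⟨k, hS⟩

/-- Auxiliary greedy matching count for a parenthesis word (`true` = '(', `false` = ')'),
given the current number of unmatched open parentheses. -/
def matchedPairsAux : List Bool → ℕ → ℕ
  | [], _ => 0
  | true :: rest, o => matchedPairsAux rest (o + 1)
  | false :: rest, 0 => matchedPairsAux rest 0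
  | false :: rest, o + 1 => matchedPairsAux rest o + 1

/-- The number of paired `()`'s in a parenthesis word (`true` = '(', `false` = ')'). -/
def matchedPairs (w : List Bool) : ℕ := matchedPairsAux w 0

/-- Column `j` of a diagram `D ⊆ [n]²`: the set `D_j = {i : (i,j) ∈ D}`. -/
def colSet {n : ℕ} (D : Finset (Fin n × Fin n)) (j : Fin n) : Finset (Fin n) :=
  Finset.univ.filter fun i => (i, j) ∈ D

/-- The parenthesis part of `word_{j,I}(D)`: reading rows `i` from top to bottom, record
'(' (= `true`) if `(i,j) ∉ D` and `i ∈ I`, and ')' (= `false`) if `(i,j) ∈ D` and `i ∉ I`.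
(The `⋆`'s, at positions with `(i,j) ∈ D` and `i ∈ I`, play no role in the matching.) -/
def colWord {n : ℕ} (D : Finset (Fin n × Fin n)) (j : Fin n) (I : Finset (Fin n)) :
    List Bool :=
  (List.finRange n).filterMap fun i =>
    if (i, j) ∈ D then (if i ∈ I then none else some false)
    else (if i ∈ I then some true else none)

/-- `θ_D^j(I)`: the number of paired `()`'s plus the number of `⋆`'s in `word_{j,I}(D)`. -/
def thetaCol {n : ℕ} (D : Finset (Fin n × Fin n)) (j : Fin n) (I : Finset (Fin n)) : ℕ :=
  matchedPairs (colWord D j I) + (colSet D j ∩ I).card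

/-- `θ_D(I) = Σ_{j=1}^n θ_D^j(I)`. -/
def theta {n : ℕ} (D : Finset (Fin n × Fin n)) (I : Finset (Fin n)) : ℕ :=
  ∑ j : Fin n, thetaCol D j I

/-- The Rothe diagram `D(w) = {(i,j) : w(i) > j, w⁻¹(j) > i}` of a permutation `w ∈ S_n`. -/
def rothe {n : ℕ} (w : Equiv.Perm (Fin n)) : Finset (Fin n × Fin n) :=
  Finset.univ.filter fun p => p.2 < w p.1 ∧ p.1 < w⁻¹ p.2


/-- Number of elements of `S` with value `< k`. -/
def cnt {n : ℕ} (S : Finset (Fin n)) (k : ℕ) : ℕ := (S.filter fun x : Fin n => (x : ℕ) < k).card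

/-- Counting form of `DomLE`. -/
def Dom {n : ℕ} (R S : Finset (Fin n)) : Prop :=
  R.card = S.card ∧ ∀ k, cnt S k ≤ cnt R k

theorem emb_lt_iff {n : ℕ} (S : Finset (Fin n)) (k : Fin S.card) (m : ℕ) :
    ((S.orderEmbOfFin rfl k : Fin n) : ℕ) < m ↔ (k : ℕ) < cnt S m := by
  have key : cnt S m = (Finset.univ.filter fun q : Fin S.card =>
      ((S.orderEmbOfFin rfl q : Fin n) : ℕ) < m).card := by
    unfold cnt
    conv_lhs => rw [← S.map_orderEmbOfFin_univ rfl, Finset.filter_map, Finset.card_map]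
    rfl
  rw [key]
  constructor
  · intro h
    have : (Finset.Iic k) ⊆ (Finset.univ.filter fun q : Fin S.card =>
      ((S.orderEmbOfFin rfl q : Fin n) : ℕ) < m) := by
      intro q hq
      simp only [Finset.mem_Iic] at hq
      simp only [Finset.mem_filter, Finset.mem_univ, true_and]
      have := (S.orderEmbOfFin rfl).monotone hq
      exact lt_of_le_of_lt this h
    have := Finset.card_le_card this
    rw [Fin.card_Iic] at this
    omega
  · intro h
    by_contra hc
    have : (Finset.univ.filter fun q : Fin S.card =>
      ((S.orderEmbOfFin rfl q : Fin n) : ℕ) < m) ⊆ Finset.Iio k := by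
      intro q hq
      simp only [Finset.mem_filter, Finset.mem_univ, true_and] at hq
      rw [Finset.mem_Iio]
      by_contra hk
      have h2 : S.orderEmbOfFin rfl k ≤ S.orderEmbOfFin rfl q :=
        (S.orderEmbOfFin rfl).monotone (not_lt.mp hk)
      exact hc (lt_of_le_of_lt h2 hq)
    have := Finset.card_le_card this
    rw [Fin.card_Iio] at this
    omega

theorem cnt_le_card {n : ℕ} (S : Finset (Fin n)) (k : ℕ) : cnt S k ≤ S.card :=
  Finset.card_filter_le _ _

theorem domLE_iff {n : ℕ} (R S : Finset (Fin n)) : DomLE R S ↔ Dom R S := by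
  unfold DomLE Dom
  refine and_congr_right fun hc => ?_
  have getR : ∀ (T : Finset (Fin n)) (k : ℕ) (h : k < (T.sort (· ≤ ·)).length),
      (T.sort (· ≤ ·)).get ⟨k, h⟩ = T.orderEmbOfFin rfl ⟨k, by simpa using h⟩ := by
    intro T k h
    rw [Finset.orderEmbOfFin_apply]; rfl
  constructor
  · intro H m
    by_contra hlt
    push Not at hlt
    have h1 : cnt R m < S.card := lt_of_lt_of_le hlt (cnt_le_card _ _)
    have h2 : cnt R m < R.card := by omega
    have := H (cnt R m) (by simpa using h2) (by simpa using h1)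
    rw [getR, getR] at this
    have h3 := (emb_lt_iff S ⟨cnt R m, h1⟩ m).2 hlt
    have h4 := (emb_lt_iff R ⟨cnt R m, h2⟩ m).1 (lt_of_le_of_lt this h3)
    simp at h4
  · intro H k hR hS
    rw [getR, getR]
    have h1 := (emb_lt_iff S ⟨k, by simpa using hS⟩ _).1 (Nat.lt_succ_self _)
    have h2 := (emb_lt_iff R ⟨k, by simpa using hR⟩ _).2 (lt_of_lt_of_le h1 (H _))
    exact Nat.lt_succ_iff.mp h2

theorem cnt_insert {n : ℕ} {S : Finset (Fin n)} {x : Fin n} (hx : x ∉ S) (k : ℕ) :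
    cnt (insert x S) k = cnt S k + if (x : ℕ) < k then 1 else 0 := by
  unfold cnt
  rw [Finset.filter_insert]
  split_ifs with h
  · rw [Finset.card_insert_of_notMem (by simp [hx])]
  · rfl

theorem cnt_erase {n : ℕ} {S : Finset (Fin n)} {x : Fin n} (hx : x ∈ S) (k : ℕ) :
    cnt (S.erase x) k + (if (x : ℕ) < k then 1 else 0) = cnt S k := by
  rw [← cnt_insert (Finset.notMem_erase x S), Finset.insert_erase hx]

theorem cnt_succ {n : ℕ} (S : Finset (Fin n)) (x : Fin n) :
    cnt S ((x : ℕ) + 1) = cnt S x + if x ∈ S then 1 else 0 := by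
  have h0 : ∀ T : Finset (Fin n), x ∉ T → cnt T ((x : ℕ) + 1) = cnt T x := by
    intro T hT
    unfold cnt
    congr 1
    apply Finset.filter_congr
    intro y hy
    have : y ≠ x := fun h => hT (h ▸ hy)
    have : (y : ℕ) ≠ x := fun h => this (Fin.ext h)
    omega
  split_ifs with h
  · rw [← cnt_erase h, ← cnt_erase h (x : ℕ), h0 _ (Finset.notMem_erase x S)]
    simp
  · simpa using h0 S h

/-- Moving one element. -/
theorem cnt_move {n : ℕ} {S : Finset (Fin n)} {x y : Fin n} (hx : x ∈ S) (hy : y ∉ S) (k : ℕ) :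
    cnt (insert y (S.erase x)) k + (if (x : ℕ) < k then 1 else 0) =
      cnt S k + if (y : ℕ) < k then 1 else 0 := by
  rw [cnt_insert (by simp [hy]), ← cnt_erase hx k]
  omega

theorem card_move {n : ℕ} {S : Finset (Fin n)} {x y : Fin n} (hx : x ∈ S) (hy : y ∉ S) :
    (insert y (S.erase x)).card = S.card := by
  rw [Finset.card_insert_of_notMem (by simp [hy]), Finset.card_erase_add_one hx]

theorem cnt_mono {n : ℕ} (S : Finset (Fin n)) {a b : ℕ} (h : a ≤ b) : cnt S a ≤ cnt S b := by
  apply Finset.card_le_card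
  intro x hx
  simp only [Finset.mem_filter] at hx ⊢
  exact ⟨hx.1, by omega⟩

theorem cnt_top {n : ℕ} (S : Finset (Fin n)) (k : ℕ) (h : ∀ x ∈ S, (x : ℕ) < k) :
    cnt S k = S.card := by
  unfold cnt
  rw [Finset.filter_true_of_mem h]

theorem lt_of_cnt_top {n : ℕ} {S : Finset (Fin n)} {k : ℕ} (h : S.card ≤ cnt S k) :
    ∀ x ∈ S, (x : ℕ) < k := by
  unfold cnt at h
  have := Finset.eq_of_subset_of_card_le (Finset.filter_subset _ _) h
  exact Finset.filter_eq_self.mp this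

/-- Move an element down. -/
theorem Dom.down {n : ℕ} {R S : Finset (Fin n)} (h : Dom R S) {x y : Fin n} (hx : x ∈ R)
    (hy : y ∉ R) (hyx : y < x) : Dom (insert y (R.erase x)) S := by
  refine ⟨by rw [card_move hx hy, h.1], fun k => ?_⟩
  have h1 := cnt_move hx hy k
  have h2 := h.2 k
  have : (y : ℕ) < x := hyx
  split_ifs at h1 <;> omega

/-- Move an element up. -/
theorem Dom.up {n : ℕ} {R S : Finset (Fin n)} (h : Dom R S) {x y : Fin n} (hx : x ∈ R)
    (hy : y ∉ R) (hyx : ∀ k, (x : ℕ) < k → k ≤ (y : ℕ) → cnt S k < cnt R k) :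
    Dom (insert y (R.erase x)) S := by
  refine ⟨by rw [card_move hx hy, h.1], fun k => ?_⟩
  have h1 := cnt_move hx hy k
  have h2 := h.2 k
  have h3 := hyx k
  split_ifs at h1 <;> omega

theorem map_swap_of {n : ℕ} {R : Finset (Fin n)} {x y : Fin n} (hx : x ∈ R) (hy : y ∉ R) :
    R.map (Equiv.swap x y).toEmbedding = insert y (R.erase x) := by
  ext k
  simp only [Finset.mem_map_equiv, Equiv.symm_swap, Finset.mem_insert, Finset.mem_erase]
  by_cases h1 : k = x
  · subst h1; simp [hy]; rintro rfl; exact hy hx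
  · by_cases h2 : k = y
    · subst h2; simp [hx]
    · rw [Equiv.swap_apply_of_ne_of_ne h1 h2]; simp [h1, h2]

theorem map_swap_both {n : ℕ} {R : Finset (Fin n)} {x y : Fin n} (hxy : x ∈ R ↔ y ∈ R) :
    R.map (Equiv.swap x y).toEmbedding = R := by
  ext k
  simp only [Finset.mem_map_equiv, Equiv.symm_swap]
  by_cases h1 : k = x
  · subst h1; simp [hxy]
  · by_cases h2 : k = y
    · subst h2; simp [hxy]
    · rw [Equiv.swap_apply_of_ne_of_ne h1 h2]

/-- When `S` does not separate `x` from `y = x+1` in the wrong way, swapping is allowed. -/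
theorem Dom.swap {n : ℕ} {R S : Finset (Fin n)} (h : Dom R S) {x y : Fin n}
    (hxy : (x : ℕ) + 1 = y) (hS : x ∈ S → cnt S ((x : ℕ) + 1) < cnt R ((x : ℕ) + 1) ∨ y ∈ S) :
    Dom (R.map (Equiv.swap x y).toEmbedding) S := by
  by_cases hx : x ∈ R <;> by_cases hy : y ∈ R
  · rwa [map_swap_both (by simp [hx, hy])]
  · rw [map_swap_of hx hy]
    refine h.up hx hy fun k hk1 hk2 => ?_
    obtain rfl : k = (x : ℕ) + 1 := by omega
    have a1 := cnt_succ R x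
    have a2 := cnt_succ S x
    have a3 := cnt_succ R y
    have a4 := cnt_succ S y
    have b1 := h.2 x
    have b2 := h.2 (x + 1)
    have b3 := h.2 (y + 1)
    rw [← hxy] at a3 a4 b3
    by_cases c1 : x ∈ S <;> by_cases c2 : y ∈ S <;> simp [c1, c2, hx, hy] at a1 a2 a3 a4 hS <;>
      omega
  · rw [Equiv.swap_comm, map_swap_of hy hx]
    exact h.down hy hx (by rw [Fin.lt_def]; omega)
  · rwa [map_swap_both (by simp [hx, hy])]

theorem icnt {n : ℕ} {S T : Finset (Fin n)} {a b : ℕ} (hab : a ≤ b)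
    (h : ∀ y ∈ S, a ≤ (y : ℕ) → (y : ℕ) < b → y ∈ T) :
    cnt S b + cnt T a ≤ cnt T b + cnt S a := by
  have key : ∀ U : Finset (Fin n), cnt U b =
      cnt U a + (U.filter fun x : Fin n => a ≤ (x : ℕ) ∧ (x : ℕ) < b).card := by
    intro U
    unfold cnt
    rw [← Finset.card_union_of_disjoint]
    · congr 1
      ext x
      simp only [Finset.mem_filter, Finset.mem_union]
      constructor
      · rintro ⟨h1, h2⟩
        by_cases h3 : (x : ℕ) < a
        · exact Or.inl ⟨h1, h3⟩
        · exact Or.inr ⟨h1, by omega, h2⟩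
      · rintro (⟨h1, h2⟩ | ⟨h1, h2⟩)
        · exact ⟨h1, by omega⟩
        · exact ⟨h1, by omega⟩
    · rw [Finset.disjoint_left]
      intro x hx hy
      simp only [Finset.mem_filter] at hx hy
      omega
  have hsub : (S.filter fun x : Fin n => a ≤ (x : ℕ) ∧ (x : ℕ) < b) ⊆
      (T.filter fun x : Fin n => a ≤ (x : ℕ) ∧ (x : ℕ) < b) := by
    intro x hx
    simp only [Finset.mem_filter] at hx ⊢
    exact ⟨h x hx.1 hx.2.1 hx.2.2, hx.2⟩
  have := Finset.card_le_card hsub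
  have k1 := key S
  have k2 := key T
  omega

theorem cnt_zero {n : ℕ} (S : Finset (Fin n)) : cnt S 0 = 0 := by simp [cnt]

theorem exchange {n : ℕ} {Cj Dj Cc Dc : Finset (Fin n)} {i : Fin n}
    (h1 : Dom Cj Dj) (h2 : Dom Cc Dc) (hiC : i ∈ Cj)
    (htight : cnt Cj ((i : ℕ) + 1) ≤ cnt Dj ((i : ℕ) + 1)) (hic : i ∉ Cc)
    (hDc : ∀ x ∈ Dc, (x : ℕ) < (i : ℕ) + 1)
    (hsub : ∀ x ∈ Dj, (x : ℕ) < (i : ℕ) + 1 → x ∈ Dc) :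
    ∃ x ∈ Cc, x ∉ Cj ∧ x < i ∧
      ∀ k, (x : ℕ) < k → k ≤ (i : ℕ) → cnt Dc k < cnt Cc k := by
  have e1 : cnt Dc ((i : ℕ) + 1) = Dc.card := cnt_top _ _ hDc
  have e2 := h2.2 ((i : ℕ) + 1)
  have e3 := cnt_le_card Cc ((i : ℕ) + 1)
  have e4 := cnt_succ Cc i
  have e5 := cnt_succ Cj i
  simp only [hic, hiC, if_true, if_false] at e4 e5
  have e6 := h2.1
  have hlt : ∀ x ∈ Cc, (x : ℕ) < (i : ℕ) := lt_of_cnt_top (by omega)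
  have hne : (Cc \ Cj).Nonempty := by
    rw [Finset.sdiff_nonempty]
    intro hsubs
    have := icnt (S := Cc) (T := Cj) (a := 0) (b := i) (by omega) (fun y hy _ _ => hsubs hy)
    have t2 := icnt (S := Dj) (T := Dc) (a := 0) (b := i + 1) (by omega)
      (fun y hy _ h => hsub y hy h)
    simp only [cnt_zero] at this t2
    omega
  obtain ⟨hxC, hxj⟩ := Finset.mem_sdiff.mp (Finset.max'_mem _ hne)
  refine ⟨(Cc \ Cj).max' hne, hxC, hxj, hlt _ hxC, ?_⟩
  intro k hk hki
  by_contra hc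
  have f1 := icnt (S := Cc) (T := Cj) (a := k) (b := i) hki (by
    intro y hy hky _
    by_contra hyj
    have := Finset.le_max' (Cc \ Cj) y (Finset.mem_sdiff.mpr ⟨hy, hyj⟩)
    rw [Fin.le_def] at this
    omega)
  have f2 := icnt (S := Dj) (T := Dc) (a := k) (b := i + 1) (by omega)
      (fun y hy _ h => hsub y hy h)
  have f3 := h1.2 k
  omega

/-- Columns of the Rothe diagram. -/
def col {n : ℕ} (w : Equiv.Perm (Fin n)) (j : Fin n) : Finset (Fin n) := colSet (rothe w) j

theorem mem_col {n : ℕ} {w : Equiv.Perm (Fin n)} {i j : Fin n} :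
    i ∈ col w j ↔ j < w i ∧ i < w⁻¹ j := by
  simp [col, colSet, rothe]

/-- The combinatorial set. -/
def InS {n : ℕ} (w : Equiv.Perm (Fin n)) (d : Fin n → ℕ) : Prop :=
  ∃ C : Fin n → Finset (Fin n), (∀ j, Dom (C j) (col w j)) ∧
    ∀ i, d i = (Finset.univ.filter fun j => i ∈ C j).card

theorem col_asc {n : ℕ} {w : Equiv.Perm (Fin n)} {i i' j : Fin n} (hi : (i : ℕ) + 1 = i')
    (h : w i < w i') (hm : i ∈ col w j) : i' ∈ col w j := by
  rw [mem_col] at hm ⊢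
  refine ⟨hm.1.trans h, ?_⟩
  have h1 : w⁻¹ j ≠ i' := by
    intro e
    rw [Equiv.Perm.inv_eq_iff_eq] at e
    have := hm.1.trans h
    rw [e] at this
    exact lt_irrefl _ this
  have h2 : (w⁻¹ j : ℕ) ≠ i' := fun e => h1 (Fin.ext e)
  have h3 := hm.2
  rw [Fin.lt_def] at h3 ⊢
  omega

theorem inS_swap_asc {n : ℕ} {w : Equiv.Perm (Fin n)} {i i' : Fin n} (hi : (i : ℕ) + 1 = i')
    (h : w i < w i') {d : Fin n → ℕ} (hd : InS w d) : InS w (d ∘ Equiv.swap i i') := by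
  obtain ⟨C, hC, hcount⟩ := hd
  refine ⟨fun j => (C j).map (Equiv.swap i i').toEmbedding, fun j => ?_, fun k => ?_⟩
  · exact (hC j).swap hi fun hm => Or.inr (col_asc hi h hm)
  · simp only [Function.comp, hcount, Finset.mem_map_equiv, Equiv.symm_swap]

theorem inS_last {n : ℕ} {w : Equiv.Perm (Fin n)} {d : Fin n → ℕ} (hd : InS w d) (i : Fin n)
    (hi : (i : ℕ) + 1 = n) : d i = 0 := by
  obtain ⟨C, hC, hcount⟩ := hd
  rw [hcount, Finset.card_eq_zero, Finset.filter_eq_empty_iff]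
  intro j _ hij
  have h1 : cnt (col w j) i = (col w j).card := cnt_top _ _ (by
    intro x hx
    have h2 := (mem_col.mp hx).2
    rw [Fin.lt_def] at h2
    have := (w⁻¹ j).isLt
    omega)
  have h3 := (hC j).2 i
  have := lt_of_cnt_top (S := C j) (k := i) (by rw [(hC j).1]; omega) i hij
  omega

theorem inv_app {n : ℕ} (w : Equiv.Perm (Fin n)) (x : Fin n) : w⁻¹ (w x) = x := by simp

section descent
variable {n : ℕ} {w : Equiv.Perm (Fin n)} {i i' : Fin n}

theorem mem_col_swap (k j : Fin n) : k ∈ col (w * Equiv.swap i i') j ↔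
    j < w (Equiv.swap i i' k) ∧ k < Equiv.swap i i' (w⁻¹ j) := by
  rw [mem_col]; simp [mul_inv_rev]

/-- the special column -/
theorem col_special (hi : (i : ℕ) + 1 = i') (h : w i' < w i) :
    col w (w i') = insert i (col (w * Equiv.swap i i') (w i')) ∧
    (∀ x ∈ col (w * Equiv.swap i i') (w i'), (x : ℕ) < i) := by
  have hb : ∀ x ∈ col (w * Equiv.swap i i') (w i'), (x : ℕ) < i := by
    intro x hx
    rw [mem_col_swap] at hx
    simpa using hx.2
  refine ⟨?_, hb⟩
  ext x
  rw [Finset.mem_insert]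
  by_cases hx : x = i
  · subst hx
    simp only [true_or, iff_true, mem_col]
    refine ⟨h, ?_⟩
    rw [inv_app, Fin.lt_def]; omega
  · have hx' : (x : ℕ) ≠ i := fun e => hx (Fin.ext e)
    simp only [hx, false_or]
    rw [mem_col, mem_col_swap]
    simp only [inv_app, Equiv.swap_apply_right]
    by_cases hx2 : x = i'
    · subst hx2
      simp only [Fin.lt_def]; omega
    · rw [Equiv.swap_apply_of_ne_of_ne hx hx2]
      simp only [Fin.lt_def]
      constructor
      · rintro ⟨h1, h2⟩; exact ⟨h1, by omega⟩
      · rintro ⟨h1, h2⟩; exact ⟨h1, by omega⟩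

theorem col_other (hi : (i : ℕ) + 1 = i') (h : w i' < w i) {j : Fin n} (hj : j ≠ w i') :
    col (w * Equiv.swap i i') j = col w j ∨
    (i ∈ col w j ∧ i' ∉ col w j ∧
      col (w * Equiv.swap i i') j = insert i' ((col w j).erase i)) := by
  have hii : i ≠ i' := by rintro rfl; omega
  have hj' : w⁻¹ j ≠ i' := fun e => hj (by rw [← e]; simp)
  have hmap : col (w * Equiv.swap i i') j = (col w j).map (Equiv.swap i i').toEmbedding := by
    ext k
    rw [mem_col_swap, Finset.mem_map_equiv, Equiv.symm_swap, mem_col]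
    refine and_congr_right fun hk => ?_
    have hv' : (w⁻¹ j : ℕ) ≠ i' := fun e => hj' (Fin.ext e)
    by_cases hv : w⁻¹ j = i
    · rw [hv]
      have hwj : j = w i := by rw [← hv]; simp
      subst hwj
      by_cases k1 : k = i
      · subst k1; simp at hk; exact absurd hk (not_lt.mpr h.le)
      · by_cases k2 : k = i'
        · subst k2; simp at hk
        · rw [Equiv.swap_apply_of_ne_of_ne k1 k2, Equiv.swap_apply_left]
          have k1' : (k : ℕ) ≠ i := fun e => k1 (Fin.ext e)
          simp only [Fin.lt_def]; omega
    · rw [Equiv.swap_apply_of_ne_of_ne hv hj']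
      have hv2 : (w⁻¹ j : ℕ) ≠ i := fun e => hv (Fin.ext e)
      by_cases k1 : k = i
      · subst k1; simp only [Equiv.swap_apply_left, Fin.lt_def]; omega
      · by_cases k2 : k = i'
        · subst k2; simp only [Equiv.swap_apply_right, Fin.lt_def]; omega
        · rw [Equiv.swap_apply_of_ne_of_ne k1 k2]
  have himp : i' ∈ col w j → i ∈ col w j := by
    rw [mem_col, mem_col]
    rintro ⟨a, b⟩
    refine ⟨a.trans h, ?_⟩
    simp only [Fin.lt_def] at b ⊢; omega
  rw [hmap]
  by_cases h1 : i ∈ col w j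
  · by_cases h2 : i' ∈ col w j
    · left; exact map_swap_both (by simp [h1, h2])
    · right; exact ⟨h1, h2, map_swap_of h1 h2⟩
  · left; exact map_swap_both ⟨fun a => absurd a h1, fun a => absurd (himp a) h1⟩

theorem dom_other (hi : (i : ℕ) + 1 = i') (h : w i' < w i) {j : Fin n} (hj : j ≠ w i')
    {R : Finset (Fin n)} (hR : i' ∉ R) :
    Dom R (col w j) ↔ Dom R (col (w * Equiv.swap i i') j) := by
  rcases col_other hi h hj with e | ⟨h1, h2, e⟩
  · rw [e]
  · rw [e]
    have key := fun k => cnt_move h1 h2 k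
    have hc := card_move h1 h2
    constructor
    · rintro ⟨a, b⟩
      refine ⟨a.trans hc.symm, fun k => ?_⟩
      have := b k
      have := key k
      split_ifs at this <;> omega
    · rintro ⟨a, b⟩
      refine ⟨a.trans hc, fun k => ?_⟩
      have q := key k
      have q1 := b k
      have q2 := key (k + 1)
      have q3 := b (k + 1)
      have q4 := cnt_mono (col w j) (show k ≤ k + 1 by omega)
      have q5 : k = i' → cnt R (k + 1) = cnt R k := by
        rintro rfl
        simpa [hR] using cnt_succ R i'
      split_ifs at q q2 <;> omega

/-- The length statistic. -/
def len {n : ℕ} (w : Equiv.Perm (Fin n)) : ℕ := ∑ j, (col w j).card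

theorem len_swap (hi : (i : ℕ) + 1 = i') (h : w i' < w i) :
    len w = len (w * Equiv.swap i i') + 1 := by
  unfold len
  rw [← Finset.add_sum_erase _ _ (Finset.mem_univ (w i')),
    ← Finset.add_sum_erase (a := w i') _ (fun j => (col (w * Equiv.swap i i') j).card)
      (Finset.mem_univ _)]
  have h1 := col_special hi h
  have h2 : (col w (w i')).card = (col (w * Equiv.swap i i') (w i')).card + 1 := by
    rw [h1.1, Finset.card_insert_of_notMem]
    intro hm
    exact lt_irrefl _ (h1.2 i hm)
  rw [h2, Finset.sum_congr rfl (g := fun j => (col (w * Equiv.swap i i') j).card)]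
  · ring
  · intro j hj
    rcases col_other hi h (Finset.ne_of_mem_erase hj) with e | ⟨a, b, e⟩
    · rw [e]
    · rw [e, card_move a b]

theorem inS_of_swap (hi : (i : ℕ) + 1 = i') {d : Fin n → ℕ} (hd : d i' = 0)
    (hs : InS w (d ∘ Equiv.swap i i')) : InS w d := by
  obtain ⟨C, hC, hcount⟩ := hs
  have hno : ∀ j, i ∉ C j := by
    have := hcount i
    simp only [Function.comp, Equiv.swap_apply_left, hd] at this
    have := (Finset.card_eq_zero.mp this.symm)
    rw [Finset.filter_eq_empty_iff] at this
    exact fun j => this (Finset.mem_univ j)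
  refine ⟨fun j => (C j).map (Equiv.swap i i').toEmbedding, fun j => ?_, fun k => ?_⟩
  · dsimp only
    by_cases hj : i' ∈ C j
    · rw [Equiv.swap_comm, map_swap_of hj (hno j)]
      exact (hC j).down hj (hno j) (by rw [Fin.lt_def]; omega)
    · rw [map_swap_both (by simp [hj, hno j])]
      exact hC j
  · simp only [Finset.mem_map_equiv, Equiv.symm_swap]
    rw [← hcount (Equiv.swap i i' k)]
    simp

theorem inS_of_lower (hi : (i : ℕ) + 1 = i') (h : w i' < w i) {d e : Fin n → ℕ} (hd : d i' = 0)
    (hde : ∀ k, d k = e k + if k = i then 1 else 0)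
    (hs : InS (w * Equiv.swap i i') e) : InS w d := by
  obtain ⟨C, hC, hcount⟩ := hs
  have hii : i' ≠ i := by rintro rfl; omega
  have hno : ∀ j, i' ∉ C j := by
    have := hcount i'
    have h2 := hde i'
    rw [if_neg hii, hd] at h2
    rw [show e i' = 0 by omega] at this
    have := (Finset.card_eq_zero.mp this.symm)
    rw [Finset.filter_eq_empty_iff] at this
    exact fun j => this (Finset.mem_univ j)
  obtain ⟨s1, s2⟩ := col_special hi h
  have hnoc : i ∉ C (w i') := by
    intro hm
    have t1 := cnt_top _ _ s2
    have t2 := (hC (w i')).2 i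
    have := lt_of_cnt_top (S := C (w i')) (k := i) (by rw [(hC _).1]; omega) i hm
    omega
  have hnoE : i ∉ col (w * Equiv.swap i i') (w i') := fun hm => lt_irrefl _ (s2 i hm)
  refine ⟨Function.update C (w i') (insert i (C (w i'))), fun j => ?_, fun k => ?_⟩
  · by_cases hj : j = w i'
    · subst hj
      rw [Function.update_self, s1]
      have := hC (w i')
      refine ⟨by rw [Finset.card_insert_of_notMem hnoc, Finset.card_insert_of_notMem hnoE, this.1],
        fun k => ?_⟩
      rw [cnt_insert hnoc, cnt_insert hnoE]
      exact Nat.add_le_add_right (this.2 k) _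
    · rw [Function.update_of_ne hj, dom_other hi h hj (hno j)]
      exact hC j
  · rw [hde, hcount]
    by_cases hk : k = i
    · subst hk
      rw [if_pos rfl, ← Finset.card_insert_of_notMem (a := w i') (by simp [hnoc])]
      congr 1
      ext j
      by_cases hj : j = w i'
      · subst hj; simp
      · simp [hj]
    · rw [if_neg hk, add_zero]
      congr 1
      ext j
      by_cases hj : j = w i'
      · subst hj; simp [hk]
      · simp [hj]

theorem lower_of_mem (hi : (i : ℕ) + 1 = i') (h : w i' < w i) {d e : Fin n → ℕ}
    (hde : ∀ k, d k = e k + if k = i then 1 else 0)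
    {C : Fin n → Finset (Fin n)} (hC : ∀ j, Dom (C j) (col w j))
    (hcount : ∀ i, d i = (Finset.univ.filter fun j => i ∈ C j).card)
    (hno : ∀ j, i' ∉ C j) (him : i ∈ C (w i')) : InS (w * Equiv.swap i i') e := by
  obtain ⟨s1, s2⟩ := col_special hi h
  have hnoE : i ∉ col (w * Equiv.swap i i') (w i') := fun hm => lt_irrefl _ (s2 i hm)
  refine ⟨Function.update C (w i') ((C (w i')).erase i), fun j => ?_, fun k => ?_⟩
  · by_cases hj : j = w i'
    · subst hj
      rw [Function.update_self]
      have := hC (w i')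
      rw [s1] at this
      refine ⟨?_, fun k => ?_⟩
      · have t := this.1
        rw [Finset.card_insert_of_notMem hnoE, ← Finset.card_erase_add_one him] at t
        omega
      · have t := this.2 k
        rw [cnt_insert hnoE, ← cnt_erase him k] at t
        omega
    · rw [Function.update_of_ne hj, ← dom_other hi h hj (hno j)]
      exact hC j
  · have hk := hde k
    rw [hcount] at hk
    by_cases hki : k = i
    · subst hki
      rw [if_pos rfl] at hk
      have : (Finset.univ.filter fun j => k ∈ C j) = insert (w i') (Finset.univ.filter fun j =>
          k ∈ Function.update C (w i') ((C (w i')).erase k) j) := by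
        ext j
        by_cases hj : j = w i'
        · subst hj; simp [him]
        · simp [hj]
      rw [this, Finset.card_insert_of_notMem (by simp)] at hk
      omega
    · rw [if_neg hki, add_zero] at hk
      rw [← hk]
      congr 1
      ext j
      by_cases hj : j = w i'
      · subst hj; simp [hki]
      · simp [hj]

theorem inS_desc (hi : (i : ℕ) + 1 = i') (h : w i' < w i) {d e : Fin n → ℕ} (hd : d i' = 0)
    (hde : ∀ k, d k = e k + if k = i then 1 else 0) :
    InS w d ↔ InS w (d ∘ Equiv.swap i i') ∨ InS (w * Equiv.swap i i') e := by
  constructor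
  swap
  · rintro (hs | hs)
    · exact inS_of_swap hi hd hs
    · exact inS_of_lower hi h hd hde hs
  rintro ⟨C, hC, hcount⟩
  have hno : ∀ j, i' ∉ C j := by
    have := hcount i'
    rw [hd] at this
    have := (Finset.card_eq_zero.mp this.symm)
    rw [Finset.filter_eq_empty_iff] at this
    exact fun j => this (Finset.mem_univ j)
  by_cases hm : i ∈ C (w i')
  · right
    exact lower_of_mem hi h hde hC hcount hno hm
  by_cases hbad : ∃ j, i ∈ C j ∧ cnt (C j) ((i : ℕ) + 1) ≤ cnt (col w j) ((i : ℕ) + 1)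
  · obtain ⟨j, hij, ht⟩ := hbad
    right
    have hjc : j ≠ w i' := by rintro rfl; exact hm hij
    obtain ⟨s1, s2⟩ := col_special hi h
    have a1 := cnt_succ (C j) i
    have a2 := cnt_succ (col w j) i
    have a3 := cnt_succ (C j) i'
    have a4 := cnt_succ (col w j) i'
    rw [← hi] at a3 a4
    have b1 := (hC j).2 i
    have b2 := (hC j).2 (i + 1 + 1)
    simp only [hij, hno j, if_true, if_false] at a1 a3
    have hiD : i ∈ col w j := by
      by_contra hh
      simp only [hh, if_false] at a2
      omega
    have hiD' : i' ∉ col w j := by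
      intro hh
      simp only [hh, if_true] at a4
      omega
    rw [mem_col] at hiD hiD'
    have hcj : w i' < j := by
      rcases lt_or_ge j (w i') with hlt | hge
      · exfalso
        apply hiD'
        refine ⟨hlt, ?_⟩
        have h1 : w⁻¹ j ≠ i' := by
          intro e
          rw [Equiv.Perm.inv_eq_iff_eq] at e
          exact hjc e
        have h2 : (w⁻¹ j : ℕ) ≠ i' := fun e => h1 (Fin.ext e)
        have h3 := hiD.2
        rw [Fin.lt_def] at h3 ⊢
        omega
      · exact lt_of_le_of_ne hge (Ne.symm hjc)
    obtain ⟨x, hxc, hxj, hxi, hx⟩ := exchange (hC j) (hC (w i')) hij ht hm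
      (by
        intro x hx
        rw [s1, Finset.mem_insert] at hx
        rcases hx with rfl | hx
        · omega
        · have := s2 x hx; omega)
      (by
        intro x hx hxi
        rw [mem_col] at hx ⊢
        refine ⟨hcj.trans hx.1, ?_⟩
        simp only [inv_app, Fin.lt_def]
        omega)
    have hne : x ≠ i := ne_of_lt hxi
    let C' : Fin n → Finset (Fin n) := fun q =>
      if q = w i' then insert i ((C (w i')).erase x) else
      if q = j then insert x ((C j).erase i) else C q
    have hxi' : x ≠ i' := by rintro rfl; rw [Fin.lt_def] at hxi; omega
    have hii : i' ≠ i := by rintro rfl; omega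
    refine lower_of_mem hi h hde (C := C') ?_ ?_ ?_ ?_
    · intro q
      by_cases q1 : q = w i'
      · subst q1
        simp only [C', if_true]
        exact (hC _).up hxc hm hx
      · by_cases q2 : q = j
        · subst q2
          simp only [C', if_true, q1, if_false]
          exact (hC _).down hij hxj hxi
        · simp only [C', q1, q2, if_false]
          exact hC q
    · intro k
      rw [hcount]
      by_cases k1 : k = i
      · subst k1
        rw [← card_move (S := Finset.univ.filter fun j => k ∈ C j) (x := j) (y := w i')
          (by simp [hij]) (by simp [hm])]
        congr 1
        ext q
        by_cases q1 : q = w i'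
        · subst q1; simp [C']
        · by_cases q2 : q = j
          · subst q2; simp [C', q1, hne.symm]
          · simp [C', q1, q2]
      · by_cases k2 : k = x
        · subst k2
          rw [← card_move (S := Finset.univ.filter fun j => k ∈ C j) (x := w i') (y := j)
            (by simp [hxc]) (by simp [hxj])]
          congr 1
          ext q
          by_cases q1 : q = w i'
          · subst q1; simp [C', hne, hjc.symm]
          · by_cases q2 : q = j
            · subst q2; simp [C', q1]
            · simp [C', q1, q2]
        · congr 1
          ext q
          by_cases q1 : q = w i'
          · subst q1; simp [C', k1, k2]
          · by_cases q2 : q = j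
            · subst q2; simp [C', q1, k1, k2]
            · simp [C', q1, q2]
    · intro q
      by_cases q1 : q = w i'
      · subst q1; simp [C', hii, hno]
      · by_cases q2 : q = j
        · subst q2; simp [C', q1, hxi'.symm, hno]
        · simp [C', q1, q2, hno]
    · simp [C']
  · left
    push Not at hbad
    refine ⟨fun j => (C j).map (Equiv.swap i i').toEmbedding, fun j => ?_, fun k => ?_⟩
    · dsimp only
      by_cases hj : i ∈ C j
      · exact (hC j).swap hi fun _ => Or.inl (hbad j hj)
      · rw [map_swap_both (by simp [hj, hno j])]
        exact hC j
    · simp only [Function.comp, hcount, Finset.mem_map_equiv, Equiv.symm_swap]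

end descent

theorem comp_X_mul {n : ℕ} (i : Fin n) (k : ℕ) (g : MvPolynomial (Fin n) ℤ) :
    homogeneousComponent (k + 1) (X i * g) = X i * homogeneousComponent k g := by
  ext d
  rw [coeff_homogeneousComponent, coeff_X_mul', coeff_X_mul', coeff_homogeneousComponent]
  by_cases h : i ∈ d.support
  · rw [if_pos h, if_pos h]
    have h1 : d = (d - Finsupp.single i 1) + Finsupp.single i 1 := by
      ext q
      simp only [Finsupp.add_apply, Finsupp.tsub_apply]
      by_cases hq : i = q
      · subst hq
        rw [Finsupp.mem_support_iff] at h
        simp; omega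
      · simp [Finsupp.single_apply, hq]
    have h2 : d.degree = (d - Finsupp.single i 1).degree + 1 := by
      conv_lhs => rw [h1]
      rw [map_add, Finsupp.degree_single]
    simp only [h2, add_left_inj]
  · rw [if_neg h, if_neg h, ite_self]

theorem X_sub_ne {n : ℕ} {i j : Fin n} (hij : i ≠ j) :
    (X i - X j : MvPolynomial (Fin n) ℤ) ≠ 0 := by
  intro h
  exact hij (X_injective (sub_eq_zero.mp h))

theorem hom_of_mul {n : ℕ} {i j : Fin n} (hij : i ≠ j) {m : ℕ} {g : MvPolynomial (Fin n) ℤ}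
    (h : ((X i - X j) * g).IsHomogeneous (m + 1)) : g.IsHomogeneous m := by
  have key : ∀ k, k ≠ m → homogeneousComponent k g = 0 := by
    intro k hk
    have h1 : homogeneousComponent (k + 1) ((X i - X j) * g) =
        (X i - X j) * homogeneousComponent k g := by
      rw [sub_mul, map_sub, comp_X_mul, comp_X_mul, sub_mul]
    rw [homogeneousComponent_of_mem h, if_neg (by omega)] at h1
    rcases mul_eq_zero.mp h1.symm with h2 | h2
    · exact absurd h2 (X_sub_ne hij)
    · exact h2
  intro d hd
  by_contra hne
  have h1 := congrArg (coeff d) (key d.degree (by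
    intro e
    apply hne
    rw [← e, Finsupp.degree_eq_weight_one]
    rfl))
  rw [coeff_homogeneousComponent, if_pos rfl] at h1
  exact hd (by simpa using h1)

theorem degreeOf_X_sub {n : ℕ} {i j : Fin n} (hij : i ≠ j) (k : Fin n) (hk : k = i ∨ k = j) :
    1 ≤ degreeOf k (X i - X j : MvPolynomial (Fin n) ℤ) := by
  have : (Finsupp.single k 1) ∈ (X i - X j : MvPolynomial (Fin n) ℤ).support := by
    rw [mem_support_iff, coeff_sub, coeff_X', coeff_X']
    rcases hk with rfl | rfl
    · simp [Finsupp.single_left_inj, hij.symm]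
    · simp [Finsupp.single_left_inj, hij]
  have h2 := monomial_le_degreeOf k this
  simpa using h2

theorem eq_one_of_asc {n : ℕ} {w : Equiv.Perm (Fin n)}
    (h : ∀ i j : Fin n, (i : ℕ) + 1 = j → w i < w j) : w = 1 := by
  have hs : StrictMono w := by
    cases n with
    | zero => intro a; exact a.elim0
    | succ m =>
      rw [Fin.strictMono_iff_lt_succ]
      intro i
      exact h _ _ (by simp)
  have := hs.eq_id
  ext x
  rw [this]; rfl

theorem exists_desc {n : ℕ} {w : Equiv.Perm (Fin n)} (hw : w ≠ 1) :
    ∃ i j : Fin n, (i : ℕ) + 1 = j ∧ w j < w i := by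
  by_contra hc
  push Not at hc
  apply hw
  apply eq_one_of_asc
  intro i j hij
  refine lt_of_le_of_ne (hc i j hij) fun e => ?_
  have := w.injective e
  subst this
  omega

theorem exists_asc {n : ℕ} {w : Equiv.Perm (Fin n)} (hw : w ≠ Fin.revPerm) :
    ∃ i j : Fin n, (i : ℕ) + 1 = j ∧ w i < w j := by
  have h1 : (Fin.revPerm * w : Equiv.Perm (Fin n)) ≠ 1 := by
    intro e
    apply hw
    ext x
    have := congrArg (fun f : Equiv.Perm (Fin n) => Fin.rev (f x)) e
    simp at this
    simp [this]
  obtain ⟨i, j, hij, h⟩ := exists_desc h1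
  exact ⟨i, j, hij, by simpa using h⟩

theorem len_le {n : ℕ} (w : Equiv.Perm (Fin n)) : len w ≤ n * n := by
  unfold len
  calc ∑ j, (col w j).card ≤ ∑ _j : Fin n, n :=
        Finset.sum_le_sum fun j _ => by simpa using Finset.card_le_univ (col w j)
    _ = n * n := by simp

theorem len_asc {n : ℕ} {w : Equiv.Perm (Fin n)} {i i' : Fin n} (hi : (i : ℕ) + 1 = i')
    (h : w i < w i') : len (w * Equiv.swap i i') = len w + 1 := by
  have := len_swap (w := w * Equiv.swap i i') hi (by simpa using h)
  rwa [mul_assoc, Equiv.swap_mul_self, mul_one] at this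

theorem len_rev {n : ℕ} : len (Fin.revPerm : Equiv.Perm (Fin n)) = ∑ i : Fin n, (n - 1 - (i : ℕ)) := by
  unfold len
  apply Finset.sum_congr rfl
  intro j _
  have : col (Fin.revPerm : Equiv.Perm (Fin n)) j = Finset.Iio (Fin.rev j) := by
    ext i
    have h1 : (Fin.revPerm : Equiv.Perm (Fin n))⁻¹ j = Fin.rev j := by
      rw [Equiv.Perm.inv_eq_iff_eq]; simp
    rw [mem_col, h1, Finset.mem_Iio, Fin.revPerm_apply]
    simp only [Fin.lt_def, Fin.val_rev]
    omega
  rw [this, Fin.card_Iio, Fin.val_rev]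
  omega

section poly
variable {n : ℕ} {Schub : Equiv.Perm (Fin n) → MvPolynomial (Fin n) ℤ}

theorem up_induction {P : Equiv.Perm (Fin n) → Prop} (h0 : P Fin.revPerm)
    (hs : ∀ (w : Equiv.Perm (Fin n)) (i j : Fin n), (i : ℕ) + 1 = (j : ℕ) → w i < w j →
      P (w * Equiv.swap i j) → P w) (w : Equiv.Perm (Fin n)) : P w := by
  induction hm : n * n - len w using Nat.strong_induction_on generalizing w with
  | _ m ih =>
    by_cases hw : w = Fin.revPerm
    · rw [hw]; exact h0
    · obtain ⟨i, j, hij, h⟩ := exists_asc hw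
      have h1 := len_asc hij h
      have h2 := len_le (w * Equiv.swap i j)
      exact hs w i j hij h (ih _ (by omega) _ rfl)

theorem schub_hom
    (hbase : Schub Fin.revPerm = ∏ i : Fin n, X i ^ (n - 1 - (i : ℕ)))
    (hrec : ∀ (w : Equiv.Perm (Fin n)) (i j : Fin n), (i : ℕ) + 1 = (j : ℕ) → w i < w j →
      (X i - X j) * Schub w =
        Schub (w * Equiv.swap i j) -
          rename (Equiv.swap i j) (Schub (w * Equiv.swap i j)))
    (w : Equiv.Perm (Fin n)) : (Schub w).IsHomogeneous (len w) := by
  induction w using up_induction with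
  | h0 =>
    rw [hbase, len_rev]
    exact IsHomogeneous.prod _ _ _ fun i _ => isHomogeneous_X_pow i _
  | hs w i j hij h ih =>
    rw [len_asc hij h] at ih
    apply hom_of_mul (i := i) (j := j) (by rintro rfl; omega)
    rw [hrec w i j hij h]
    exact ih.sub ih.rename_isHomogeneous

theorem schub_deg
    (hbase : Schub Fin.revPerm = ∏ i : Fin n, X i ^ (n - 1 - (i : ℕ)))
    (hrec : ∀ (w : Equiv.Perm (Fin n)) (i j : Fin n), (i : ℕ) + 1 = (j : ℕ) → w i < w j →
      (X i - X j) * Schub w =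
        Schub (w * Equiv.swap i j) -
          rename (Equiv.swap i j) (Schub (w * Equiv.swap i j)))
    (w : Equiv.Perm (Fin n)) : ∀ k : Fin n, degreeOf k (Schub w) ≤ n - 1 - (k : ℕ) := by
  induction w using up_induction with
  | h0 =>
    intro k
    rw [hbase]
    refine (degreeOf_prod_le _ _ _).trans ?_
    rw [Finset.sum_eq_single k]
    · simp
    · intro b _ hb
      exact degreeOf_X_pow_of_ne _ hb.symm
    · simp
  | hs w i j hij h ih =>
    have hne : i ≠ j := by rintro rfl; omega
    intro k
    by_cases hz : Schub w = 0
    · rw [hz]; simp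
    have h1 := degreeOf_mul_eq (n := k) (X_sub_ne hne) hz
    rw [hrec w i j hij h] at h1
    have h2 := degreeOf_sub_le k (Schub (w * Equiv.swap i j))
      (rename (Equiv.swap i j) (Schub (w * Equiv.swap i j)))
    have h3 : degreeOf k (rename (Equiv.swap i j) (Schub (w * Equiv.swap i j))) =
        degreeOf (Equiv.swap i j k) (Schub (w * Equiv.swap i j)) := by
      conv_lhs => rw [← Equiv.swap_apply_self i j k]
      exact degreeOf_rename_of_injective (Equiv.swap i j).injective _
    rw [h3] at h2
    have h4 := ih k
    have h5 := ih (Equiv.swap i j k)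
    have h6 := degreeOf_X_sub hne k
    have hjn := j.isLt
    by_cases k1 : k = i
    · subst k1
      rw [Equiv.swap_apply_left] at h5 h2
      simp only [true_or, forall_const] at h6
      rcases le_max_iff.mp h2 with h7 | h7 <;> omega
    · by_cases k2 : k = j
      · subst k2
        rw [Equiv.swap_apply_right] at h5 h2
        simp only [or_true, forall_const] at h6
        rcases le_max_iff.mp h2 with h7 | h7 <;> omega
      · rw [Equiv.swap_apply_of_ne_of_ne k1 k2, max_self] at h2
        omega

theorem coeff_swap (i j : Fin n) (f : MvPolynomial (Fin n) ℤ) (d : Fin n →₀ ℕ) :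
    coeff d (rename (Equiv.swap i j) f) = coeff (d.mapDomain (Equiv.swap i j)) f := by
  conv_lhs => rw [show d = (d.mapDomain (Equiv.swap i j)).mapDomain (Equiv.swap i j) by
    rw [← Finsupp.mapDomain_comp]
    have : (⇑(Equiv.swap i j) ∘ ⇑(Equiv.swap i j)) = id := by ext x; simp
    rw [this, Finsupp.mapDomain_id]]
  exact coeff_rename_mapDomain _ (Equiv.swap i j).injective _ _

theorem mapDomain_swap (i j : Fin n) (d : Fin n →₀ ℕ) :
    ⇑(d.mapDomain (Equiv.swap i j)) = ⇑d ∘ Equiv.swap i j := by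
  ext x
  conv_lhs => rw [← Equiv.swap_apply_self i j x]
  rw [Finsupp.mapDomain_apply (Equiv.swap i j).injective]
  rfl

theorem coeff_asc
    (hrec : ∀ (w : Equiv.Perm (Fin n)) (i j : Fin n), (i : ℕ) + 1 = (j : ℕ) → w i < w j →
      (X i - X j) * Schub w =
        Schub (w * Equiv.swap i j) -
          rename (Equiv.swap i j) (Schub (w * Equiv.swap i j)))
    {w : Equiv.Perm (Fin n)} {i j : Fin n} (hij : (i : ℕ) + 1 = j) (h : w i < w j)
    (d : Fin n →₀ ℕ) :
    coeff d (Schub w) = coeff (d.mapDomain (Equiv.swap i j)) (Schub w) := by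
  have hne : i ≠ j := by rintro rfl; omega
  have h1 := hrec w i j hij h
  have h2 := congrArg (rename (Equiv.swap i j)) h1
  rw [map_mul, map_sub, map_sub, rename_X, rename_X, rename_rename, Equiv.swap_apply_left,
    Equiv.swap_apply_right] at h2
  have : (⇑(Equiv.swap i j) ∘ ⇑(Equiv.swap i j)) = id := by ext x; simp
  rw [this, rename_id_apply] at h2
  have h3 : rename (Equiv.swap i j) (Schub w) = Schub w := by
    apply mul_left_cancel₀ (X_sub_ne hne)
    rw [h1, ← neg_sub (X j) (X i), neg_mul, h2]
    ring
  rw [← coeff_swap, h3]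

theorem coeff_desc
    (hrec : ∀ (w : Equiv.Perm (Fin n)) (i j : Fin n), (i : ℕ) + 1 = (j : ℕ) → w i < w j →
      (X i - X j) * Schub w =
        Schub (w * Equiv.swap i j) -
          rename (Equiv.swap i j) (Schub (w * Equiv.swap i j)))
    {w : Equiv.Perm (Fin n)} {i j : Fin n} (hij : (i : ℕ) + 1 = j) (h : w j < w i)
    (e : Fin n →₀ ℕ) (he : e j = 0) :
    coeff (e + Finsupp.single i 1) (Schub w) =
      coeff ((e + Finsupp.single i 1).mapDomain (Equiv.swap i j)) (Schub w) +
      coeff e (Schub (w * Equiv.swap i j)) := by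
  have hne : i ≠ j := by rintro rfl; omega
  have h1 := hrec (w * Equiv.swap i j) i j hij (by simpa using h)
  rw [mul_assoc, Equiv.swap_mul_self, mul_one] at h1
  have h2 := congrArg (coeff (e + Finsupp.single i 1)) h1
  rw [sub_mul, coeff_sub, coeff_sub, coeff_swap, add_comm e, coeff_X_mul, coeff_X_mul',
    if_neg (by simp [he, hne])] at h2
  rw [add_comm e]
  linarith

theorem main_ind
    (hbase : Schub Fin.revPerm = ∏ i : Fin n, X i ^ (n - 1 - (i : ℕ)))
    (hrec : ∀ (w : Equiv.Perm (Fin n)) (i j : Fin n), (i : ℕ) + 1 = (j : ℕ) → w i < w j →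
      (X i - X j) * Schub w =
        Schub (w * Equiv.swap i j) -
          rename (Equiv.swap i j) (Schub (w * Equiv.swap i j)))
    (m : ℕ) : ∀ w : Equiv.Perm (Fin n), len w = m → ∀ d : Fin n →₀ ℕ,
      ∃ N : ℕ, coeff d (Schub w) = coeff 0 (Schub 1) * N ∧ (0 < N ↔ InS w d) := by
  induction m using Nat.strong_induction_on with
  | _ m ihm =>
  intro w hw
  have key : ∀ t : ℕ, ∀ i : Fin n, n - 1 - (i : ℕ) = t → ∀ d : Fin n →₀ ℕ, 0 < d i →
      (∀ k, i < k → d k = 0) →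
      ∃ N : ℕ, coeff d (Schub w) = coeff 0 (Schub 1) * N ∧ (0 < N ↔ InS w d) := by
    intro t
    induction t with
    | zero =>
      intro i hi d hd _
      have hin := i.isLt
      refine ⟨0, ?_, ?_⟩
      · simp only [Nat.cast_zero, mul_zero]
        by_contra hc
        have h1 := monomial_le_degreeOf i (mem_support_iff.mpr hc)
        have h2 := schub_deg hbase hrec w i
        omega
      · simp only [lt_irrefl, false_iff]
        intro hS
        have := inS_last hS i (by omega)
        omega
    | succ t iht =>
      intro i hi d hd hk
      have hin := i.isLt
      obtain ⟨j, hij⟩ : ∃ j : Fin n, (i : ℕ) + 1 = j := ⟨⟨i + 1, by omega⟩, rfl⟩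
      have hne : i ≠ j := by rintro rfl; omega
      have hdj : d j = 0 := hk j (by rw [Fin.lt_def]; omega)
      obtain ⟨N1, hN1, hS1⟩ := iht j (by omega) (d.mapDomain (Equiv.swap i j))
        (by rw [mapDomain_swap]; simpa using hd)
        (by
          intro k hjk
          rw [mapDomain_swap]
          have hki : k ≠ i := by rintro rfl; rw [Fin.lt_def] at hjk; omega
          simp only [Function.comp]
          rw [Equiv.swap_apply_of_ne_of_ne hki (ne_of_gt hjk)]
          exact hk k (by rw [Fin.lt_def] at hjk ⊢; omega))
      rw [mapDomain_swap] at hS1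
      rcases lt_or_gt_of_ne (fun e => hne (w.injective e)) with h | h
      · refine ⟨N1, ?_, hS1.trans ⟨fun hs => ?_, inS_swap_asc hij h⟩⟩
        · rw [coeff_asc hrec hij h, hN1]
        · have := inS_swap_asc hij h hs
          have e2 : ((⇑d ∘ ⇑(Equiv.swap i j)) ∘ ⇑(Equiv.swap i j)) = ⇑d := by ext x; simp
          rwa [e2] at this
      · have hde : d = (d - Finsupp.single i 1) + Finsupp.single i 1 := by
          ext q
          simp only [Finsupp.add_apply, Finsupp.tsub_apply]
          by_cases hq : i = q
          · subst hq
            simp; omega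
          · simp [Finsupp.single_apply, hq]
        generalize he : d - Finsupp.single i 1 = e at hde
        have hej : e j = 0 := by rw [← he]; simp [hdj]
        have hl := len_swap hij h
        obtain ⟨N2, hN2, hS2⟩ := ihm _ (by omega) (w * Equiv.swap i j) rfl e
        refine ⟨N1 + N2, ?_, ?_⟩
        · have := coeff_desc hrec hij h e hej
          rw [← hde] at this
          rw [this, hN1, hN2]
          push_cast
          ring
        · rw [inS_desc hij h (e := e) hdj, ← hS1, ← hS2]
          · omega
          · intro k
            rw [hde, Finsupp.add_apply, Finsupp.single_apply]
            simp only [eq_comm]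
  intro d
  by_cases hd : d = 0
  · subst hd
    by_cases hw1 : w = 1
    · subst hw1
      refine ⟨1, by simp, ?_⟩
      simp only [zero_lt_one, true_iff]
      refine ⟨fun _ => ∅, fun j => ?_, by simp⟩
      have : col (1 : Equiv.Perm (Fin n)) j = ∅ := by
        ext i
        rw [mem_col]
        simp
        exact fun a => a.le
      rw [this]
      exact ⟨rfl, fun _ => le_rfl⟩
    · obtain ⟨i, j, hij, h⟩ := exists_desc hw1
      have hl := len_swap hij h
      refine ⟨0, ?_, ?_⟩
      · simp only [Nat.cast_zero, mul_zero]
        apply (schub_hom hbase hrec w).coeff_eq_zero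
        simp; omega
      · simp only [lt_irrefl, false_iff]
        rintro ⟨C, hC, hcount⟩
        have hz : len w = 0 := by
          unfold len
          apply Finset.sum_eq_zero
          intro j _
          rw [← (hC j).1, Finset.card_eq_zero]
          ext k
          have := (Finset.card_eq_zero.mp (hcount k).symm)
          rw [Finset.filter_eq_empty_iff] at this
          simpa using this (Finset.mem_univ j)
        omega
  · have hne : d.support.Nonempty := Finsupp.support_nonempty_iff.mpr hd
    refine key _ (d.support.max' hne) rfl d ?_ ?_
    · have := Finset.max'_mem _ hne
      rw [Finsupp.mem_support_iff] at this
      omega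
    · intro k hk
      by_contra hc
      have := Finset.le_max' d.support k (Finsupp.mem_support_iff.mpr hc)
      exact absurd hk (not_lt.mpr this)

end poly

/-- The support of the Schubert polynomial `𝔖_w` equals `{ξ^C : C_j ≤ D(w)_j ∀ j}`,
where `ξ^C_i = #{j : i ∈ C_j}` and `D(w)_j` are the columns of the Rothe diagram. -/
theorem stmt11 (n : ℕ) (Schub : Equiv.Perm (Fin n) → MvPolynomial (Fin n) ℤ)
    -- `𝔖_{w₀} = x_1^{n-1} x_2^{n-2} ⋯ x_{n-1}` for the longest permutation `w₀`.
    (hbase : Schub Fin.revPerm = ∏ i : Fin n, X i ^ (n - 1 - (i : ℕ)))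
    -- For adjacent positions `i, j = i+1` with `w(i) < w(j)`: `𝔖_w = ∂_i 𝔖_{w sᵢ}`, i.e.
    -- `(xᵢ - xⱼ) ⬝ 𝔖_w = 𝔖_{w sᵢ} - sᵢ ⬝ 𝔖_{w sᵢ}`.
    (hrec : ∀ (w : Equiv.Perm (Fin n)) (i j : Fin n), (i : ℕ) + 1 = (j : ℕ) → w i < w j →
      (X i - X j) * Schub w =
        Schub (w * Equiv.swap i j) -
          rename (Equiv.swap i j) (Schub (w * Equiv.swap i j)))
    (w : Equiv.Perm (Fin n)) :
    (↑(Schub w).support : Set (Fin n →₀ ℕ)) =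
      {d : Fin n →₀ ℕ | ∃ C : Fin n → Finset (Fin n),
        (∀ j, DomLE (C j) (colSet (rothe w) j)) ∧
        ∀ i, d i = (Finset.univ.filter fun j => i ∈ C j).card} := by
  have hone : ∃ d, coeff d (Schub Fin.revPerm) = 1 := by
    refine ⟨∑ i : Fin n, Finsupp.single i (n - 1 - (i : ℕ)), ?_⟩
    rw [hbase]
    have : ∏ i : Fin n, (X i : MvPolynomial (Fin n) ℤ) ^ (n - 1 - (i : ℕ)) =
        monomial (∑ i : Fin n, Finsupp.single i (n - 1 - (i : ℕ))) 1 := by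
      rw [monomial_sum_one]
      exact Finset.prod_congr rfl fun i _ => X_pow_eq_monomial
    rw [this, coeff_monomial, if_pos rfl]
  have hpos : 0 < coeff 0 (Schub 1) := by
    obtain ⟨d, hd⟩ := hone
    obtain ⟨N, hN, _⟩ := main_ind hbase hrec _ Fin.revPerm rfl d
    rw [hd] at hN
    by_contra hc
    push Not at hc
    have : coeff 0 (Schub 1) * (N : ℤ) ≤ 0 :=
      mul_nonpos_of_nonpos_of_nonneg hc (Int.natCast_nonneg N)
    omega
  ext d
  obtain ⟨N, hN, hS⟩ := main_ind hbase hrec _ w rfl d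
  have hset : (d ∈ {d : Fin n →₀ ℕ | ∃ C : Fin n → Finset (Fin n),
        (∀ j, DomLE (C j) (colSet (rothe w) j)) ∧
        ∀ i, d i = (Finset.univ.filter fun j => i ∈ C j).card}) ↔ InS w d := by
    simp only [Set.mem_setOf_eq, domLE_iff]
    rfl
  rw [hset, ← hS, Finset.mem_coe, mem_support_iff, hN]
  constructor
  · intro h
    by_contra hc
    apply h
    have : N = 0 := by omega
    simp [this]
  · intro h
    have : (0 : ℤ) < N := by exact_mod_cast h
    positivity
end

section
/- For every composition α (a finitely supported sequence of nonnegative integers), the key polynomial κ_α has saturated Newton polytope: every lattice point of the Newton polytope of κ_α is the exponent vector of a monomial appearing with nonzero coefficient in κ_α. -/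
open Finset MvPolynomial

/-- The Newton polytope of a polynomial in the variables `x_1, x_2, …`. -/
def newtonPolytopeNat (f : MvPolynomial ℕ ℤ) : Set (ℕ → ℝ) :=
  convexHull ℝ ((fun (d : ℕ →₀ ℕ) (i : ℕ) => ((d i : ℕ) : ℝ)) '' ↑f.support)

/-! ### Bruhat-type order on compositions -/

/-- Swap of the entries at positions `a` and `b`. -/
def ksw (a b : ℕ) (σ : ℕ →₀ ℕ) : ℕ →₀ ℕ := Finsupp.equivMapDomain (Equiv.swap a b) σ

theorem ksw_apply (a b : ℕ) (σ : ℕ →₀ ℕ) (j : ℕ) : ksw a b σ j = σ (Equiv.swap a b j) := by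
  simp [ksw, Finsupp.equivMapDomain_apply]

theorem ksw_left (a b : ℕ) (σ : ℕ →₀ ℕ) : ksw a b σ a = σ b := by simp [ksw_apply]
theorem ksw_right (a b : ℕ) (σ : ℕ →₀ ℕ) : ksw a b σ b = σ a := by simp [ksw_apply]

theorem ksw_ksw (a b : ℕ) (σ : ℕ →₀ ℕ) : ksw a b (ksw a b σ) = σ := by
  ext j; simp [ksw_apply]

theorem ksw_eq_self {a b : ℕ} {σ : ℕ →₀ ℕ} (h : σ a = σ b) : ksw a b σ = σ := by
  ext j
  rw [ksw_apply]
  by_cases h1 : j = a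
  · subst h1; simp [h]
  by_cases h2 : j = b
  · subst h2; simp [h]
  rw [Equiv.swap_apply_of_ne_of_ne h1 h2]

theorem ksw_conj (i a b : ℕ) (σ : ℕ →₀ ℕ) :
    ksw i (i + 1) (ksw a b σ) =
      ksw (Equiv.swap i (i + 1) a) (Equiv.swap i (i + 1) b) (ksw i (i + 1) σ) := by
  ext j
  simp only [ksw_apply]
  congr 1
  have := Equiv.swap_apply_apply (Equiv.swap i (i + 1)) a b
  rw [this]
  simp

theorem kswap_lt {i a b : ℕ} (h : a < b) (hne : ¬ (a = i ∧ b = i + 1)) :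
    Equiv.swap i (i + 1) a < Equiv.swap i (i + 1) b := by
  simp only [Equiv.swap_apply_def]
  split_ifs <;> omega

inductive KOrb (α : ℕ →₀ ℕ) : (ℕ →₀ ℕ) → Prop
  | refl : KOrb α α
  | step (β : ℕ →₀ ℕ) (a b : ℕ) : a < b → β a < β b → KOrb α β → KOrb α (ksw a b β)

theorem KOrb.trans {α β γ : ℕ →₀ ℕ} (h : KOrb α β) (h' : KOrb β γ) : KOrb α γ := by
  induction h' with
  | refl => exact h
  | step δ a b hab hlt _ ih => exact KOrb.step δ a b hab hlt ih

theorem KOrb.down {α β : ℕ →₀ ℕ} (h : KOrb α β) {a b : ℕ} (hab : a < b) (hle : β a ≤ β b) :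
    KOrb α (ksw a b β) := by
  rcases hle.eq_or_lt with h1 | h1
  · rw [ksw_eq_self h1]; exact h
  · exact KOrb.step β a b hab h1 h

/-- closedness under the simple swap -/
theorem KOrb.closed {α β : ℕ →₀ ℕ} {i : ℕ} (hi : α i ≤ α (i + 1)) (h : KOrb α β) :
    KOrb α (ksw i (i + 1) β) := by
  induction h with
  | refl => exact KOrb.refl.down (Nat.lt_succ_self i) hi
  | step δ a b hab hlt h ih =>
    by_cases hc : a = i ∧ b = i + 1
    · obtain ⟨rfl, rfl⟩ := hc
      rw [ksw_ksw]; exact h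
    · rw [ksw_conj]
      refine KOrb.step _ _ _ (kswap_lt hab hc) ?_ ih
      simpa [ksw_apply] using hlt

theorem KOrb.lift {γ β : ℕ →₀ ℕ} {i : ℕ} (h : KOrb (ksw i (i + 1) γ) β) :
    KOrb γ β ∨ KOrb γ (ksw i (i + 1) β) := by
  induction h with
  | refl => right; rw [ksw_ksw]; exact KOrb.refl
  | step δ a b hab hlt h ih =>
    rcases ih with ih | ih
    · left; exact KOrb.step _ _ _ hab hlt ih
    · by_cases hc : a = i ∧ b = i + 1
      · obtain ⟨rfl, rfl⟩ := hc
        left; exact ih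
      · right
        rw [ksw_conj]
        refine KOrb.step _ _ _ (kswap_lt hab hc) ?_ ih
        simpa [ksw_apply] using hlt

theorem KOrb.up {γ : ℕ →₀ ℕ} {i : ℕ} (h : γ (i + 1) ≤ γ i) : KOrb (ksw i (i + 1) γ) γ := by
  have : KOrb (ksw i (i + 1) γ) (ksw i (i + 1) (ksw i (i + 1) γ)) :=
    KOrb.refl.down (Nat.lt_succ_self i) (by rw [ksw_left, ksw_right]; exact h)
  rwa [ksw_ksw] at this

theorem KOrb.anti {α β : ℕ →₀ ℕ} (ha : ∀ i j : ℕ, i ≤ j → α j ≤ α i) (h : KOrb α β) : β = α := by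
  induction h with
  | refl => rfl
  | step δ a b hab hlt h ih =>
    subst ih
    have := ha a b hab.le
    omega

theorem KOrb.degree {α β : ℕ →₀ ℕ} (h : KOrb α β) : β.degree = α.degree := by
  induction h with
  | refl => rfl
  | step δ a b hab hlt h ih =>
    rw [← ih, ksw, Finsupp.equivMapDomain_eq_mapDomain, Finsupp.degree_mapDomain]

/-! ### Lowering -/

noncomputable def kdn (σ : ℕ →₀ ℕ) : ℕ →₀ ℕ := σ.mapRange (fun n => n - 1) rfl

theorem kdn_apply (σ : ℕ →₀ ℕ) (j : ℕ) : kdn σ j = σ j - 1 := by simp [kdn]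

theorem kdn_ksw (a b : ℕ) (σ : ℕ →₀ ℕ) : kdn (ksw a b σ) = ksw a b (kdn σ) := by
  ext j; simp [kdn_apply, ksw_apply]

/-! ### Crystal operators on lists of columns -/

def keps (i : ℕ) : List (Finset ℕ) → ℕ
  | [] => 0
  | S :: T => if i ∈ S ∧ i + 1 ∉ S then keps i T - 1
      else if i + 1 ∈ S ∧ i ∉ S then keps i T + 1 else keps i T

def kphi (i : ℕ) : List (Finset ℕ) → ℕ
  | [] => 0
  | S :: T => if (i ∈ S ∧ i + 1 ∉ S) ∧ keps i T = 0 then kphi i T + 1 else kphi i T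

def kswS (i : ℕ) (S : Finset ℕ) : Finset ℕ := S.map (Equiv.swap i (i + 1)).toEmbedding

def kf (i : ℕ) : List (Finset ℕ) → List (Finset ℕ)
  | [] => []
  | S :: T => if (i ∈ S ∧ i + 1 ∉ S) ∧ keps i T = 0 then kswS i S :: T else S :: kf i T

def ke (i : ℕ) : List (Finset ℕ) → List (Finset ℕ)
  | [] => []
  | S :: T => if (i + 1 ∈ S ∧ i ∉ S) ∧ keps i T = 0 then kswS i S :: T else S :: ke i T

noncomputable def kwt : List (Finset ℕ) → (ℕ →₀ ℕ)
  | [] => 0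
  | S :: T => Finsupp.indicator S (fun _ _ => 1) + kwt T

theorem kwt_cons (S : Finset ℕ) (T : List (Finset ℕ)) (j : ℕ) :
    kwt (S :: T) j = (if j ∈ S then 1 else 0) + kwt T j := by
  simp [kwt, Finsupp.indicator_apply]

theorem mem_kswS (i j : ℕ) (S : Finset ℕ) : j ∈ kswS i S ↔ Equiv.swap i (i + 1) j ∈ S := by
  rw [kswS, Finset.mem_map_equiv]; simp

theorem kswS_left (i : ℕ) (S : Finset ℕ) : i ∈ kswS i S ↔ i + 1 ∈ S := by simp [mem_kswS]
theorem kswS_right (i : ℕ) (S : Finset ℕ) : i + 1 ∈ kswS i S ↔ i ∈ S := by simp [mem_kswS]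
theorem kswS_kswS (i : ℕ) (S : Finset ℕ) : kswS i (kswS i S) = S := by
  ext j; simp [mem_kswS]
theorem kswS_other {i j : ℕ} (S : Finset ℕ) (h1 : j ≠ i) (h2 : j ≠ i + 1) :
    j ∈ kswS i S ↔ j ∈ S := by
  rw [mem_kswS, Equiv.swap_apply_of_ne_of_ne h1 h2]

theorem kphi_keps (i : ℕ) (T : List (Finset ℕ)) :
    kphi i T + kwt T (i + 1) = keps i T + kwt T i := by
  induction T with
  | nil => simp [kphi, keps, kwt]
  | cons S T ih =>
    rw [kwt_cons, kwt_cons, kphi, keps]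
    by_cases h1 : i ∈ S <;> by_cases h2 : i + 1 ∈ S <;> simp [h1, h2] <;> try omega
    split_ifs <;> omega

theorem keps_kf {i : ℕ} {T : List (Finset ℕ)} (h : 0 < kphi i T) :
    keps i (kf i T) = keps i T + 1 ∧ ke i (kf i T) = T ∧
    kwt (kf i T) i + 1 = kwt T i ∧ kwt (kf i T) (i + 1) = kwt T (i + 1) + 1 ∧
    ∀ j, j ≠ i → j ≠ i + 1 → kwt (kf i T) j = kwt T j := by
  induction T with
  | nil => simp [kphi] at h
  | cons S T ih =>
    by_cases hc : (i ∈ S ∧ i + 1 ∉ S) ∧ keps i T = 0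
    · rw [kf, if_pos hc]
      obtain ⟨⟨h1, h2⟩, h3⟩ := hc
      refine ⟨?_, ?_, ?_, ?_, ?_⟩
      · simp [keps, kswS_left, kswS_right, h1, h2, h3]
      · simp [ke, kswS_left, kswS_right, h1, h2, h3, kswS_kswS]
      · simp [kwt_cons, kswS_left, h1, h2, add_comm]
      · simp [kwt_cons, kswS_right, h1, h2, add_comm]
      · intro j hj1 hj2
        simp [kwt_cons, kswS_other S hj1 hj2]
    · rw [kphi, if_neg hc] at h
      obtain ⟨e1, e2, e3, e4, e5⟩ := ih h
      rw [kf, if_neg hc]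
      refine ⟨?_, ?_, ?_, ?_, ?_⟩
      · simp only [keps, e1]
        split_ifs with c1
        · have : keps i T ≠ 0 := fun h0 => hc ⟨c1, h0⟩
          omega
        · rfl
        · rfl
      · rw [ke, if_neg (by omega), e2]
      · simp only [kwt_cons]; omega
      · simp only [kwt_cons]; omega
      · intro j hj1 hj2
        simp only [kwt_cons, e5 j hj1 hj2]

theorem keps_ke {i : ℕ} {T : List (Finset ℕ)} (h : 0 < keps i T) :
    keps i (ke i T) + 1 = keps i T ∧ kf i (ke i T) = T ∧
    kwt (ke i T) i = kwt T i + 1 ∧ kwt (ke i T) (i + 1) + 1 = kwt T (i + 1) ∧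
    ∀ j, j ≠ i → j ≠ i + 1 → kwt (ke i T) j = kwt T j := by
  induction T with
  | nil => simp [keps] at h
  | cons S T ih =>
    by_cases hc : (i + 1 ∈ S ∧ i ∉ S) ∧ keps i T = 0
    · rw [ke, if_pos hc]
      obtain ⟨⟨h1, h2⟩, h3⟩ := hc
      refine ⟨?_, ?_, ?_, ?_, ?_⟩
      · simp [keps, kswS_left, kswS_right, h1, h2, h3]
      · simp [kf, kswS_left, kswS_right, h1, h2, h3, kswS_kswS]
      · simp [kwt_cons, kswS_left, h1, h2, add_comm]
      · simp [kwt_cons, kswS_right, h1, h2, add_comm]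
      · intro j hj1 hj2
        simp [kwt_cons, kswS_other S hj1 hj2]
    · have h' : 0 < keps i T := by
        rw [keps] at h
        split_ifs at h with c1 c2
        · omega
        · exact Nat.pos_of_ne_zero fun h0 => hc ⟨c2, h0⟩
        · exact h
      obtain ⟨e1, e2, e3, e4, e5⟩ := ih h'
      rw [ke, if_neg hc]
      rw [keps] at h
      refine ⟨?_, ?_, ?_, ?_, ?_⟩
      · simp only [keps]
        split_ifs at h ⊢ with c1 c2 <;> omega
      · rw [kf, if_neg, e2]
        rintro ⟨c1, c2⟩
        rw [if_pos c1] at h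
        omega
      · simp only [kwt_cons]; omega
      · simp only [kwt_cons]; omega
      · intro j hj1 hj2
        simp only [kwt_cons, e5 j hj1 hj2]

theorem kphi_kf {i : ℕ} {T : List (Finset ℕ)} (h : 0 < kphi i T) :
    kphi i (kf i T) + 1 = kphi i T := by
  obtain ⟨e1, e2, e3, e4, e5⟩ := keps_kf h
  have := kphi_keps i T
  have := kphi_keps i (kf i T)
  omega

theorem kphi_ke {i : ℕ} {T : List (Finset ℕ)} (h : 0 < keps i T) :
    kphi i (ke i T) = kphi i T + 1 := by
  obtain ⟨e1, e2, e3, e4, e5⟩ := keps_ke h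
  have := kphi_keps i T
  have := kphi_keps i (ke i T)
  omega

/-! ### Demazure sets -/

def KDem : List (Finset ℕ) → (ℕ →₀ ℕ) → Prop
  | [], τ => τ = 0
  | S :: T, τ => ∃ σ, KOrb τ σ ∧ σ ≠ 0 ∧ S = σ.support ∧ KDem T (kdn σ)

theorem KDem.mono {T : List (Finset ℕ)} {τ σ : ℕ →₀ ℕ} (h : KOrb τ σ) (hT : KDem T σ) :
    KDem T τ := by
  cases T with
  | nil =>
    have := h.degree
    simp only [KDem] at hT ⊢
    subst hT
    exact (Finsupp.degree_eq_zero_iff _).1 (by simpa using this.symm)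
  | cons S T =>
    obtain ⟨ρ, h1, h2⟩ := hT
    exact ⟨ρ, h.trans h1, h2⟩

theorem ksw_support (i : ℕ) (σ : ℕ →₀ ℕ) : (ksw i (i + 1) σ).support = kswS i σ.support := by
  ext j; simp [mem_kswS, ksw_apply]

theorem ksw_ne_zero {a b : ℕ} {σ : ℕ →₀ ℕ} (h : σ ≠ 0) : ksw a b σ ≠ 0 := by
  intro h0
  apply h
  rw [← ksw_ksw a b σ, h0]
  ext j; simp [ksw_apply]

/-- (D): highest weight elements descend. -/
theorem KDem.hw {i : ℕ} {T : List (Finset ℕ)} : ∀ {τ : ℕ →₀ ℕ}, τ (i + 1) ≤ τ i →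
    KDem T (ksw i (i + 1) τ) → keps i T = 0 → KDem T τ := by
  induction T with
  | nil =>
    intro τ _ h _
    simp only [KDem] at h ⊢
    by_contra h0
    exact ksw_ne_zero h0 h
  | cons S T ih =>
    intro τ hτ h he
    obtain ⟨σ, h1, h2, h3, h4⟩ := h
    rcases h1.lift with h1 | h1
    · exact ⟨σ, h1, h2, h3, h4⟩
    by_cases hσ : σ (i + 1) ≤ σ i
    · have := h1.down (Nat.lt_succ_self i) (by rw [ksw_left, ksw_right]; exact hσ)
      rw [ksw_ksw] at this
      exact ⟨σ, this, h2, h3, h4⟩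
    push Not at hσ
    have m1 : i + 1 ∈ S := by rw [h3]; simp; omega
    have m0 : i ∈ S := by
      by_contra m0
      simp [keps, m0, m1] at he
    have he' : keps i T = 0 := by simpa [keps, m0, m1] using he
    refine ⟨ksw i (i + 1) σ, h1, ksw_ne_zero h2, ?_, ?_⟩
    · rw [ksw_support, ← h3]
      ext j
      by_cases hj1 : j = i
      · subst hj1; simp [kswS_left, m0, m1]
      by_cases hj2 : j = i + 1
      · subst hj2; simp [kswS_right, m0, m1]
      rw [kswS_other S hj1 hj2]
    · apply ih _ _ he'
      · rw [kdn_ksw, ksw_left, ksw_right, kdn_apply, kdn_apply]; omega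
      · rw [kdn_ksw, ksw_ksw]; exact h4

/-- (A) -/
theorem KDem.e {i : ℕ} {T : List (Finset ℕ)} : ∀ {τ : ℕ →₀ ℕ}, KDem T τ → 0 < keps i T →
    KDem (ke i T) τ := by
  induction T with
  | nil => intro τ _ h; simp [keps] at h
  | cons S T ih =>
    intro τ h he
    obtain ⟨σ, h1, h2, h3, h4⟩ := h
    by_cases hc : (i + 1 ∈ S ∧ i ∉ S) ∧ keps i T = 0
    · rw [ke, if_pos hc]
      obtain ⟨⟨c1, c2⟩, c3⟩ := hc
      have z : σ i = 0 := by simpa [h3] using c2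
      refine ⟨ksw i (i + 1) σ, h1.down (Nat.lt_succ_self i) (by omega), ksw_ne_zero h2, ?_, ?_⟩
      · rw [ksw_support, h3]
      · apply KDem.hw _ _ c3
        · rw [kdn_ksw, ksw_left, ksw_right, kdn_apply, kdn_apply]; omega
        · rw [kdn_ksw, ksw_ksw]; exact h4
    · rw [ke, if_neg hc]
      refine ⟨σ, h1, h2, h3, ih h4 ?_⟩
      rw [keps] at he
      split_ifs at he with c1 c2
      · omega
      · exact Nat.pos_of_ne_zero fun h0 => hc ⟨c2, h0⟩
      · exact he

/-- (B) and (C) -/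
theorem KDem.f {i : ℕ} {T : List (Finset ℕ)} : ∀ {τ : ℕ →₀ ℕ}, KDem T τ → 0 < kphi i T →
    (τ i ≤ τ (i + 1) ∨ 0 < keps i T) → KDem (kf i T) τ := by
  induction T with
  | nil => intro τ _ h; simp [kphi] at h
  | cons S T ih =>
    intro τ h hp ho
    obtain ⟨σ, h1, h2, h3, h4⟩ := h
    by_cases hc : (i ∈ S ∧ i + 1 ∉ S) ∧ keps i T = 0
    · rw [kf, if_pos hc]
      obtain ⟨⟨c1, c2⟩, c3⟩ := hc
      have ho' : τ i ≤ τ (i + 1) := by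
        rcases ho with ho | ho
        · exact ho
        · simp [keps, c1, c2, c3] at ho
      have z : σ (i + 1) = 0 := by simpa [h3] using c2
      refine ⟨ksw i (i + 1) σ, h1.closed ho', ksw_ne_zero h2, ?_, ?_⟩
      · rw [ksw_support, h3]
      · rw [kdn_ksw]
        refine KDem.mono (KOrb.up ?_) h4
        rw [kdn_apply, kdn_apply]; omega
    · rw [kf, if_neg hc]
      rw [kphi, if_neg hc] at hp
      by_cases hσ : σ i ≤ σ (i + 1)
      · refine ⟨σ, h1, h2, h3, ih h4 hp (Or.inl ?_)⟩
        rw [kdn_apply, kdn_apply]; omega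
      by_cases he : 0 < keps i T
      · exact ⟨σ, h1, h2, h3, ih h4 hp (Or.inr he)⟩
      have m0 : i ∈ S := by rw [h3]; simp; omega
      have m1 : i + 1 ∈ S := by
        by_contra m1
        exact hc ⟨⟨m0, m1⟩, by omega⟩
      have ho' : τ i ≤ τ (i + 1) := by
        rcases ho with ho | ho
        · exact ho
        · simp [keps, m0, m1] at ho; omega
      refine ⟨ksw i (i + 1) σ, h1.closed ho', ksw_ne_zero h2, ?_, ?_⟩
      · rw [ksw_support, ← h3]
        ext j
        by_cases hj1 : j = i
        · subst hj1; simp [kswS_left, m0, m1]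
        by_cases hj2 : j = i + 1
        · subst hj2; simp [kswS_right, m0, m1]
        rw [kswS_other S hj1 hj2]
      · apply ih _ hp
        · left
          rw [kdn_ksw, ksw_left, ksw_right, kdn_apply, kdn_apply]; omega
        · rw [kdn_ksw]
          refine KDem.mono (KOrb.up ?_) h4
          rw [kdn_apply, kdn_apply]; omega

/-! ### Iterates -/

theorem kf_iter {i : ℕ} {T : List (Finset ℕ)} (k : ℕ) (h : k ≤ kphi i T) :
    keps i ((kf i)^[k] T) = keps i T + k ∧ kphi i ((kf i)^[k] T) + k = kphi i T ∧
    (ke i)^[k] ((kf i)^[k] T) = T ∧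
    kwt ((kf i)^[k] T) i + k = kwt T i ∧ kwt ((kf i)^[k] T) (i + 1) = kwt T (i + 1) + k ∧
    ∀ j, j ≠ i → j ≠ i + 1 → kwt ((kf i)^[k] T) j = kwt T j := by
  induction k with
  | zero => simp
  | succ k ih =>
    obtain ⟨a1, a2, a3, a4, a5, a6⟩ := ih (by omega)
    have hp : 0 < kphi i ((kf i)^[k] T) := by omega
    obtain ⟨e1, e2, e3, e4, e5⟩ := keps_kf hp
    have e6 := kphi_kf hp
    rw [Function.iterate_succ_apply' (kf i)]
    refine ⟨by omega, by omega, ?_, by omega, by omega, ?_⟩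
    · rw [Function.iterate_succ_apply, e2, a3]
    · intro j h1 h2
      rw [e5 j h1 h2, a6 j h1 h2]

theorem ke_iter {i : ℕ} {T : List (Finset ℕ)} (k : ℕ) (h : k ≤ keps i T) :
    keps i ((ke i)^[k] T) + k = keps i T ∧ kphi i ((ke i)^[k] T) = kphi i T + k ∧
    (kf i)^[k] ((ke i)^[k] T) = T ∧
    kwt ((ke i)^[k] T) i = kwt T i + k ∧ kwt ((ke i)^[k] T) (i + 1) + k = kwt T (i + 1) ∧
    ∀ j, j ≠ i → j ≠ i + 1 → kwt ((ke i)^[k] T) j = kwt T j := by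
  induction k with
  | zero => simp
  | succ k ih =>
    obtain ⟨a1, a2, a3, a4, a5, a6⟩ := ih (by omega)
    have hp : 0 < keps i ((ke i)^[k] T) := by omega
    obtain ⟨e1, e2, e3, e4, e5⟩ := keps_ke hp
    have e6 := kphi_ke hp
    rw [Function.iterate_succ_apply' (ke i)]
    refine ⟨by omega, by omega, ?_, by omega, by omega, ?_⟩
    · rw [Function.iterate_succ_apply, e2, a3]
    · intro j h1 h2
      rw [e5 j h1 h2, a6 j h1 h2]

theorem KDem.f_iter {i : ℕ} {T : List (Finset ℕ)} {τ : ℕ →₀ ℕ} (hT : KDem T τ) (k : ℕ)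
    (h : k ≤ kphi i T) (ho : τ i ≤ τ (i + 1) ∨ 0 < keps i T) : KDem ((kf i)^[k] T) τ := by
  induction k with
  | zero => exact hT
  | succ k ih =>
    obtain ⟨a1, a2, -⟩ := kf_iter (i := i) (T := T) k (by omega)
    rw [Function.iterate_succ_apply']
    refine (ih (by omega)).f (by omega) ?_
    rcases ho with ho | ho
    · exact Or.inl ho
    · right; omega

theorem KDem.e_iter {i : ℕ} {T : List (Finset ℕ)} {τ : ℕ →₀ ℕ} (hT : KDem T τ) (k : ℕ)
    (h : k ≤ keps i T) : KDem ((ke i)^[k] T) τ := by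
  induction k with
  | zero => exact hT
  | succ k ih =>
    obtain ⟨a1, -⟩ := ke_iter (i := i) (T := T) k (by omega)
    rw [Function.iterate_succ_apply']
    exact (ih (by omega)).e (by omega)

/-- Reflection of a string. -/
def kth (i δ : ℕ) (T : List (Finset ℕ)) : List (Finset ℕ) :=
  if keps i T ≤ kphi i T + δ then (kf i)^[kphi i T + δ - keps i T] T
  else (ke i)^[keps i T - (kphi i T + δ)] T

theorem kth_spec {i δ : ℕ} {T : List (Finset ℕ)} (h : δ ≤ keps i T) :
    keps i (kth i δ T) = kphi i T + δ ∧ kphi i (kth i δ T) + δ = keps i T ∧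
    kth i δ (kth i δ T) = T ∧
    Finsupp.single i δ + kwt (kth i δ T) = ksw i (i + 1) (Finsupp.single i δ + kwt T) := by
  have key := kphi_keps i T
  have wts : ∀ U : List (Finset ℕ), kwt U i + δ = kwt T (i + 1) → kwt U (i + 1) = kwt T i + δ →
      (∀ j, j ≠ i → j ≠ i + 1 → kwt U j = kwt T j) →
      Finsupp.single i δ + kwt U = ksw i (i + 1) (Finsupp.single i δ + kwt T) := by
    intro U u1 u2 u3
    ext j
    rw [ksw_apply]
    by_cases hj1 : j = i
    · subst hj1; simp; omega
    by_cases hj2 : j = i + 1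
    · subst hj2; simp; omega
    rw [Equiv.swap_apply_of_ne_of_ne hj1 hj2]
    simp [u3 j hj1 hj2]
  by_cases hc : keps i T ≤ kphi i T + δ
  · have hd : kth i δ T = (kf i)^[kphi i T + δ - keps i T] T := by rw [kth, if_pos hc]
    obtain ⟨a1, a2, a3, a4, a5, a6⟩ := kf_iter (i := i) (T := T) (kphi i T + δ - keps i T) (by omega)
    rw [hd]
    refine ⟨by omega, by omega, ?_, wts _ (by omega) (by omega) a6⟩
    unfold kth
    by_cases h0 : keps i T = kphi i T + δ
    · simp [h0]
    · rw [if_neg (by omega)]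
      convert a3 using 2
      omega
  · have hd : kth i δ T = (ke i)^[keps i T - (kphi i T + δ)] T := by rw [kth, if_neg hc]
    obtain ⟨a1, a2, a3, a4, a5, a6⟩ := ke_iter (i := i) (T := T) (keps i T - (kphi i T + δ)) (by omega)
    rw [hd]
    refine ⟨by omega, by omega, ?_, wts _ (by omega) (by omega) a6⟩
    unfold kth
    rw [if_pos (by omega)]
    convert a3 using 2
    omega

/-! ### Finiteness and induction -/

theorem kdn_add (σ : ℕ →₀ ℕ) : σ = Finsupp.indicator σ.support (fun _ _ => 1) + kdn σ := by
  ext j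
  simp only [Finsupp.add_apply, Finsupp.indicator_apply, kdn_apply, Finsupp.mem_support_iff]
  split_ifs <;> omega

theorem kdn_degree {σ : ℕ →₀ ℕ} (h : σ ≠ 0) : (kdn σ).degree < σ.degree := by
  have h1 := congrArg Finsupp.degree (kdn_add σ)
  rw [map_add] at h1
  by_contra hc
  have h2 : (Finsupp.indicator σ.support (fun _ _ => 1) : ℕ →₀ ℕ).degree = 0 := by omega
  rw [Finsupp.degree_eq_zero_iff] at h2
  apply h
  ext j
  have := DFunLike.congr_fun h2 j
  simpa [Finsupp.indicator_apply] using this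

theorem kinduct {P : (ℕ →₀ ℕ) → Prop}
    (base : ∀ α : ℕ →₀ ℕ, (∀ i j : ℕ, i ≤ j → α j ≤ α i) → P α)
    (step : ∀ (γ : ℕ →₀ ℕ) (i : ℕ), γ (i + 1) < γ i → P γ → P (ksw i (i + 1) γ)) :
    ∀ α, P α := by
  intro α
  induction hn : Finsupp.weight (fun j : ℕ => j) α using Nat.strong_induction_on generalizing α with
  | _ n ih =>
  by_cases ha : ∀ i, α (i + 1) ≤ α i
  · exact base α fun i j hij => antitone_nat_of_succ_le ha hij
  push Not at ha
  obtain ⟨i, hi⟩ := ha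
  rw [← ksw_ksw i (i + 1) α]
  refine step _ i (by rw [ksw_left, ksw_right]; exact hi) (ih _ ?_ _ rfl)
  have : ksw i (i + 1) α + Finsupp.single (i + 1) (α (i + 1) - α i) =
      α + Finsupp.single i (α (i + 1) - α i) := by
    ext j
    simp only [Finsupp.add_apply]
    by_cases hj1 : j = i
    · subst hj1; rw [ksw_left]; simp; omega
    by_cases hj2 : j = i + 1
    · subst hj2; rw [ksw_right]; simp; omega
    rw [ksw_apply, Equiv.swap_apply_of_ne_of_ne hj1 hj2, Finsupp.single_eq_of_ne hj2,
      Finsupp.single_eq_of_ne hj1]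
  have h2 := congrArg (Finsupp.weight (fun j : ℕ => j)) this
  simp only [map_add, Finsupp.weight_single, smul_eq_mul] at h2
  rw [mul_add, mul_one] at h2
  omega

theorem KOrb.finite : ∀ α : ℕ →₀ ℕ, {β | KOrb α β}.Finite := by
  apply kinduct
  · intro α ha
    exact (Set.finite_singleton α).subset fun β hβ => KOrb.anti ha hβ
  · intro γ i _ h
    refine (h.union (h.image (ksw i (i + 1)))).subset fun β hβ => ?_
    rcases KOrb.lift hβ with h1 | h1
    · exact Or.inl h1
    · exact Or.inr ⟨_, h1, ksw_ksw _ _ _⟩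

theorem KDem.finite (α : ℕ →₀ ℕ) : {T | KDem T α}.Finite := by
  induction hn : α.degree using Nat.strong_induction_on generalizing α with
  | _ n ih =>
  have h : ({[]} ∪ ⋃ σ ∈ {σ | KOrb α σ ∧ σ ≠ 0},
      (fun T => σ.support :: T) '' {T | KDem T (kdn σ)}).Finite := by
    refine (Set.finite_singleton _).union (Set.Finite.biUnion ?_ ?_)
    · exact (KOrb.finite α).subset fun σ h => h.1
    · rintro σ ⟨h1, h2⟩
      refine (ih _ ?_ (kdn σ) rfl).image _
      rw [← hn, ← h1.degree]
      exact kdn_degree h2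
  refine h.subset fun T hT => ?_
  cases T with
  | nil => left; rfl
  | cons S T =>
    obtain ⟨σ, h1, h2, h3, h4⟩ := hT
    right
    simp only [Set.mem_iUnion]
    exact ⟨σ, ⟨h1, h2⟩, T, h4, by rw [h3]⟩

theorem kdn_anti {α : ℕ →₀ ℕ} (ha : ∀ i j : ℕ, i ≤ j → α j ≤ α i) :
    ∀ i j : ℕ, i ≤ j → kdn α j ≤ kdn α i := by
  intro i j hij
  have := ha i j hij
  rw [kdn_apply, kdn_apply]; omega

theorem KDem.base_wt {T : List (Finset ℕ)} : ∀ {α : ℕ →₀ ℕ}, (∀ i j : ℕ, i ≤ j → α j ≤ α i) →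
    KDem T α → kwt T = α := by
  induction T with
  | nil => intro α _ h; simp only [KDem] at h; simp [kwt, h]
  | cons S T ih =>
    rintro α ha ⟨σ, h1, h2, h3, h4⟩
    obtain rfl := h1.anti ha
    rw [kwt, ih (kdn_anti ha) h4, h3, ← kdn_add]

theorem KDem.base_ex (α : ℕ →₀ ℕ) (ha : ∀ i j : ℕ, i ≤ j → α j ≤ α i) :
    ∃! T, KDem T α := by
  induction hn : α.degree using Nat.strong_induction_on generalizing α with
  | _ n ih =>
  by_cases h0 : α = 0
  · subst h0
    refine ⟨[], rfl, ?_⟩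
    intro T hT
    cases T with
    | nil => rfl
    | cons S T =>
      obtain ⟨σ, h1, h2, -⟩ := hT
      exact absurd (h1.anti ha) h2
  · obtain ⟨T, hT, hu⟩ := ih _ (by rw [← hn]; exact kdn_degree h0) (kdn α) (kdn_anti ha) rfl
    refine ⟨α.support :: T, ⟨α, KOrb.refl, h0, rfl, hT⟩, ?_⟩
    intro U hU
    cases U with
    | nil => exact absurd hU h0
    | cons S U =>
      obtain ⟨σ, h1, h2, h3, h4⟩ := hU
      obtain rfl := h1.anti ha
      rw [h3, hu U h4]

/-! ### Characters -/

noncomputable def kD (α : ℕ →₀ ℕ) : Finset (List (Finset ℕ)) := (KDem.finite α).toFinset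

theorem mem_kD {α : ℕ →₀ ℕ} {T : List (Finset ℕ)} : T ∈ kD α ↔ KDem T α := by simp [kD]

noncomputable def kF (α : ℕ →₀ ℕ) : MvPolynomial ℕ ℤ := ∑ T ∈ kD α, monomial (kwt T) 1

theorem kF_support {α m : ℕ →₀ ℕ} : m ∈ (kF α).support ↔ ∃ T, KDem T α ∧ kwt T = m := by
  classical
  rw [MvPolynomial.mem_support_iff, kF, coeff_sum]
  simp only [coeff_monomial]
  rw [Finset.sum_boole]
  simp only [ne_eq, Nat.cast_eq_zero, Finset.card_eq_zero]
  rw [← ne_eq, ← Finset.nonempty_iff_ne_empty]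
  simp [Finset.Nonempty, mem_kD]

theorem kF_base (α : ℕ →₀ ℕ) (ha : ∀ i j : ℕ, i ≤ j → α j ≤ α i) : kF α = monomial α 1 := by
  obtain ⟨T, hT, hu⟩ := KDem.base_ex α ha
  have : kD α = {T} := by
    ext U
    rw [mem_kD, Finset.mem_singleton]
    exact ⟨hu U, fun h => h ▸ hT⟩
  rw [kF, this, Finset.sum_singleton, KDem.base_wt ha hT]

theorem ksym {i δ : ℕ} (D : Finset (List (Finset ℕ))) (h1 : ∀ T ∈ D, δ ≤ keps i T)
    (h2 : ∀ T ∈ D, kth i δ T ∈ D) :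
    rename (Equiv.swap i (i + 1))
      (∑ T ∈ D, (monomial (Finsupp.single i δ + kwt T) 1 : MvPolynomial ℕ ℤ)) =
      ∑ T ∈ D, monomial (Finsupp.single i δ + kwt T) 1 := by
  rw [map_sum]
  refine Finset.sum_bij' (fun T _ => kth i δ T) (fun T _ => kth i δ T) h2 h2 ?_ ?_ ?_
  · intro T hT; exact (kth_spec (h1 T hT)).2.2.1
  · intro T hT; exact (kth_spec (h1 T hT)).2.2.1
  · intro T hT
    rw [rename_monomial, (kth_spec (h1 T hT)).2.2.2, ksw, Finsupp.equivMapDomain_eq_mapDomain]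

theorem kD_th {i : ℕ} {α : ℕ →₀ ℕ} {T : List (Finset ℕ)} {δ : ℕ} (hT : KDem T α)
    (hδ : δ ≤ keps i T) (ho : α i ≤ α (i + 1) ∨ 0 < keps i T) : KDem (kth i δ T) α := by
  unfold kth
  split_ifs with hc
  · exact hT.f_iter _ (by omega) ho
  · exact hT.e_iter _ (by omega)

theorem kX_mul (i : ℕ) (D : Finset (List (Finset ℕ))) :
    (X i : MvPolynomial ℕ ℤ) * ∑ T ∈ D, monomial (kwt T) 1 =
      ∑ T ∈ D, monomial (Finsupp.single i 1 + kwt T) 1 := by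
  rw [Finset.mul_sum]
  refine Finset.sum_congr rfl fun T _ => ?_
  rw [X, monomial_mul, one_mul]

theorem kX_split (i : ℕ) (α : ℕ →₀ ℕ) :
    X i * kF α - rename (Equiv.swap i (i + 1)) (X i * kF α) =
    X i * (∑ T ∈ (kD α).filter (fun T => keps i T = 0), monomial (kwt T) 1) -
      rename (Equiv.swap i (i + 1))
        (X i * (∑ T ∈ (kD α).filter (fun T => keps i T = 0), monomial (kwt T) 1)) := by
  have hs : rename (Equiv.swap i (i + 1))
      (X i * (∑ T ∈ (kD α).filter (fun T => ¬ keps i T = 0),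
        (monomial (kwt T) 1 : MvPolynomial ℕ ℤ))) =
      X i * (∑ T ∈ (kD α).filter (fun T => ¬ keps i T = 0), monomial (kwt T) 1) := by
    rw [kX_mul]
    apply ksym
    · intro T hT
      have := (Finset.mem_filter.1 hT).2
      omega
    · intro T hT
      obtain ⟨t1, t2⟩ := Finset.mem_filter.1 hT
      rw [mem_kD] at t1
      rw [Finset.mem_filter, mem_kD]
      refine ⟨kD_th t1 (by omega) (Or.inr (by omega)), ?_⟩
      rw [(kth_spec (show 1 ≤ keps i T by omega)).1]
      omega
  have hF : kF α = (∑ T ∈ (kD α).filter (fun T => keps i T = 0), monomial (kwt T) 1) +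
      ∑ T ∈ (kD α).filter (fun T => ¬ keps i T = 0), monomial (kwt T) 1 := by
    rw [kF, Finset.sum_filter_add_sum_filter_not]
  rw [hF, mul_add, map_add, hs]
  ring

theorem kF_rec {i : ℕ} {γ : ℕ →₀ ℕ} (h : γ (i + 1) < γ i) :
    (X i - X (i + 1)) * kF (ksw i (i + 1) γ) =
      X i * kF γ - rename (Equiv.swap i (i + 1)) (X i * kF γ) := by
  have hs : rename (Equiv.swap i (i + 1)) (kF (ksw i (i + 1) γ)) = kF (ksw i (i + 1) γ) := by
    have := ksym (i := i) (δ := 0) (kD (ksw i (i + 1) γ)) (fun _ _ => Nat.zero_le _) (by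
      intro T hT
      rw [mem_kD] at hT ⊢
      exact kD_th hT (Nat.zero_le _) (Or.inl (by rw [ksw_left, ksw_right]; exact h.le)))
    simpa [kF] using this
  have hH : (kD (ksw i (i + 1) γ)).filter (fun T => keps i T = 0) =
      (kD γ).filter (fun T => keps i T = 0) := by
    ext T
    simp only [Finset.mem_filter, mem_kD]
    constructor
    · rintro ⟨t1, t2⟩
      exact ⟨KDem.hw h.le t1 t2, t2⟩
    · rintro ⟨t1, t2⟩
      exact ⟨KDem.mono (KOrb.up h.le) t1, t2⟩
  have h2 := kX_split i (ksw i (i + 1) γ)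
  rw [hH, ← kX_split i γ] at h2
  rw [← h2, map_mul, hs, rename_X, Equiv.swap_apply_left]
  ring

/-! ### The rank function -/

noncomputable def kr (α : ℕ →₀ ℕ) (I : Finset ℕ) : ℕ :=
  sSup ((fun β : ℕ →₀ ℕ => ∑ j ∈ I, β j) '' {β | KOrb α β})

theorem kr_ge {α β : ℕ →₀ ℕ} (h : KOrb α β) (I : Finset ℕ) : ∑ j ∈ I, β j ≤ kr α I :=
  le_csSup ((KOrb.finite α).image _).bddAbove ⟨β, h, rfl⟩

theorem kr_att (α : ℕ →₀ ℕ) (I : Finset ℕ) : ∃ β, KOrb α β ∧ ∑ j ∈ I, β j = kr α I := by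
  have := Nat.sSup_mem (s := (fun β : ℕ →₀ ℕ => ∑ j ∈ I, β j) '' {β | KOrb α β})
    ⟨_, α, KOrb.refl, rfl⟩ ((KOrb.finite α).image _).bddAbove
  obtain ⟨β, h1, h2⟩ := this
  exact ⟨β, h1, h2⟩

theorem kr_le {α : ℕ →₀ ℕ} {I : Finset ℕ} {n : ℕ} (h : ∀ β, KOrb α β → ∑ j ∈ I, β j ≤ n) :
    kr α I ≤ n := by
  obtain ⟨β, h1, h2⟩ := kr_att α I
  rw [← h2]; exact h β h1

theorem kr_mono (α : ℕ →₀ ℕ) {I J : Finset ℕ} (h : I ⊆ J) : kr α I ≤ kr α J :=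
  kr_le fun _ hβ => (Finset.sum_le_sum_of_subset h).trans (kr_ge hβ J)

theorem ksum_sw (i : ℕ) (I : Finset ℕ) (β : ℕ →₀ ℕ) :
    ∑ j ∈ kswS i I, β j = ∑ j ∈ I, ksw i (i + 1) β j := by
  rw [kswS, Finset.sum_map]
  simp [ksw_apply]

theorem kr_dom (α : ℕ →₀ ℕ) {i : ℕ} {I : Finset ℕ} (h2 : i + 1 ∉ I) :
    kr α (kswS i I) ≤ kr α I := by
  refine kr_le fun β hβ => ?_
  rw [ksum_sw]
  by_cases hc : β i ≤ β (i + 1)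
  · exact kr_ge (hβ.down (Nat.lt_succ_self i) hc) I
  · refine le_trans (Finset.sum_le_sum fun j hj => ?_) (kr_ge hβ I)
    by_cases hj1 : j = i
    · subst hj1; rw [ksw_left]; omega
    · rw [ksw_apply, Equiv.swap_apply_of_ne_of_ne hj1 (by rintro rfl; exact h2 hj)]

/-- normalisation of a set -/
def kN (i : ℕ) (I : Finset ℕ) : Finset ℕ := if i + 1 ∈ I ∧ i ∉ I then kswS i I else I

theorem kswS_fix {i : ℕ} {I : Finset ℕ} (h : i ∈ I ↔ i + 1 ∈ I) : kswS i I = I := by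
  ext j
  by_cases hj1 : j = i
  · subst hj1; rw [kswS_left, h]
  by_cases hj2 : j = i + 1
  · subst hj2; rw [kswS_right, h]
  rw [kswS_other I hj1 hj2]

theorem kr_max {γ : ℕ →₀ ℕ} {i : ℕ} (h : γ (i + 1) ≤ γ i) (I : Finset ℕ) :
    kr (ksw i (i + 1) γ) I = max (kr γ I) (kr γ (kswS i I)) := by
  apply le_antisymm
  · refine kr_le fun β hβ => ?_
    rcases hβ.lift with h1 | h1
    · exact (kr_ge h1 I).trans (le_max_left _ _)
    · refine le_trans (le_of_eq ?_) ((kr_ge h1 (kswS i I)).trans (le_max_right _ _))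
      rw [ksum_sw, ksw_ksw]
  · refine max_le ?_ ?_
    · exact kr_le fun β hβ => kr_ge ((KOrb.up h).trans hβ) I
    · refine kr_le fun β hβ => ?_
      rw [ksum_sw]
      exact kr_ge (((KOrb.up h).trans hβ).closed (by rw [ksw_left, ksw_right]; exact h)) I

theorem kr_N {γ : ℕ →₀ ℕ} {i : ℕ} (h : γ (i + 1) ≤ γ i) (I : Finset ℕ) :
    kr (ksw i (i + 1) γ) I = kr γ (kN i I) := by
  rw [kr_max h, kN]
  split_ifs with hc
  · apply max_eq_right
    have := kr_dom γ (i := i) (I := kswS i I) (by rw [kswS_right]; exact hc.2)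
    rwa [kswS_kswS] at this
  · apply max_eq_left
    by_cases h1 : i + 1 ∈ I
    · rw [kswS_fix]
      tauto
    · exact kr_dom γ h1

theorem mem_kN (i : ℕ) (I : Finset ℕ) (j : ℕ) : j ∈ kN i I ↔
    if j = i then (i ∈ I ∨ i + 1 ∈ I) else if j = i + 1 then (i ∈ I ∧ i + 1 ∈ I) else j ∈ I := by
  unfold kN
  by_cases hj1 : j = i
  · subst hj1
    rw [if_pos rfl]
    split_ifs with hc
    · rw [kswS_left]; tauto
    · tauto
  by_cases hj2 : j = i + 1
  · subst hj2
    rw [if_neg hj1, if_pos rfl]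
    split_ifs with hc
    · rw [kswS_right]; tauto
    · tauto
  rw [if_neg hj1, if_neg hj2]
  split_ifs with hc
  · rw [kswS_other I hj1 hj2]
  · rfl

theorem kr_submod : ∀ (α : ℕ →₀ ℕ) (I J : Finset ℕ),
    kr α (I ∪ J) + kr α (I ∩ J) ≤ kr α I + kr α J := by
  apply kinduct
  · intro α ha I J
    have : ∀ K, kr α K = ∑ j ∈ K, α j := by
      intro K
      obtain ⟨β, h1, h2⟩ := kr_att α K
      rw [← h2, h1.anti ha]
    simp only [this]
    exact (Finset.sum_union_inter).le
  · intro γ i hγ ih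
    have special : ∀ I J : Finset ℕ, i ∈ I → i + 1 ∉ I → i ∉ J → i + 1 ∈ J →
        kr γ (kN i (I ∪ J)) + kr γ (kN i (I ∩ J)) ≤ kr γ (kN i I) + kr γ (kN i J) := by
      intro I J a1 a2 a3 a4
      have e1 : kN i (I ∪ J) = I ∪ J := by
        ext j; rw [mem_kN]; split_ifs with c1 c2 <;> simp_all
      have e2 : kN i (I ∩ J) = I ∩ J := by
        ext j; rw [mem_kN]; split_ifs with c1 c2 <;> simp_all
      have e3 : kN i I = I := by
        ext j; rw [mem_kN]; split_ifs with c1 c2 <;> simp_all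
      have e4 : kN i J = insert i (J.erase (i + 1)) := by
        ext j; rw [mem_kN]; split_ifs with c1 c2 <;> simp_all
      rw [e1, e2, e3, e4]
      have b1 := ih I (insert i (J.erase (i + 1)))
      have f1 : I ∪ insert i (J.erase (i + 1)) = (I ∪ J).erase (i + 1) := by
        ext j; grind
      have f2 : I ∩ insert i (J.erase (i + 1)) = insert i (I ∩ J) := by
        ext j; grind
      rw [f1, f2] at b1
      have b2 := ih (insert i (I ∩ J)) (((I ∪ J).erase (i + 1)).erase i)
      have f3 : insert i (I ∩ J) ∪ ((I ∪ J).erase (i + 1)).erase i = (I ∪ J).erase (i + 1) := by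
        ext j; grind
      have f4 : insert i (I ∩ J) ∩ ((I ∪ J).erase (i + 1)).erase i = I ∩ J := by
        ext j; grind
      rw [f3, f4] at b2
      have b3 := ih ((I ∪ J).erase (i + 1)) ((I ∪ J).erase i)
      have f5 : (I ∪ J).erase (i + 1) ∪ (I ∪ J).erase i = I ∪ J := by
        ext j; grind
      have f6 : (I ∪ J).erase (i + 1) ∩ (I ∪ J).erase i = ((I ∪ J).erase (i + 1)).erase i := by
        ext j; grind
      rw [f5, f6] at b3
      have b4 := kr_dom γ (i := i) (I := (I ∪ J).erase (i + 1)) (by simp)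
      have f7 : kswS i ((I ∪ J).erase (i + 1)) = (I ∪ J).erase i := by
        ext j
        by_cases hj1 : j = i
        · subst hj1; rw [kswS_left]; simp
        by_cases hj2 : j = i + 1
        · subst hj2; rw [kswS_right]; simp [a1, a4]
        rw [kswS_other _ hj1 hj2]; simp [hj1, hj2]
      rw [f7] at b4
      omega
    intro I J
    simp only [kr_N hγ.le]
    by_cases s1 : i ∈ I ∧ i + 1 ∉ I ∧ i ∉ J ∧ i + 1 ∈ J
    · exact special I J s1.1 s1.2.1 s1.2.2.1 s1.2.2.2
    by_cases s2 : i ∈ J ∧ i + 1 ∉ J ∧ i ∉ I ∧ i + 1 ∈ I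
    · have := special J I s2.1 s2.2.1 s2.2.2.1 s2.2.2.2
      rw [union_comm, inter_comm] at this
      omega
    have g1 : kN i (I ∪ J) = kN i I ∪ kN i J := by
      ext j
      rw [mem_union, mem_kN, mem_kN, mem_kN]
      split_ifs with c1 c2
      · simp only [mem_union]; tauto
      · simp only [mem_union]; tauto
      · simp only [mem_union]
    have g2 : kN i (I ∩ J) = kN i I ∩ kN i J := by
      ext j
      rw [mem_inter, mem_kN, mem_kN, mem_kN]
      split_ifs with c1 c2
      · simp only [mem_inter]; tauto
      · simp only [mem_inter]; tauto
      · simp only [mem_inter]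
    rw [g1, g2]
    exact ih _ _

/-! ### Support -/

def KL (α m : ℕ →₀ ℕ) : Prop := m.degree = α.degree ∧ ∀ I : Finset ℕ, ∑ j ∈ I, m j ≤ kr α I

theorem kmove_sum {m m' : ℕ →₀ ℕ} {i k : ℕ}
    (h : m' + Finsupp.single (i + 1) k = m + Finsupp.single i k) (I : Finset ℕ) :
    ∑ j ∈ I, m' j + (if i + 1 ∈ I then k else 0) = ∑ j ∈ I, m j + (if i ∈ I then k else 0) := by
  have : ∑ j ∈ I, (m' + Finsupp.single (i + 1) k) j = ∑ j ∈ I, (m + Finsupp.single i k) j := by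
    rw [h]
  simpa [Finset.sum_add_distrib, Finsupp.single_apply] using this

theorem kmove_degree {m m' : ℕ →₀ ℕ} {i k : ℕ}
    (h : m' + Finsupp.single (i + 1) k = m + Finsupp.single i k) : m'.degree = m.degree := by
  have := congrArg Finsupp.degree h
  simpa using this

theorem kmove_mk {m m' : ℕ →₀ ℕ} {i k : ℕ} (h1 : m' i = m i + k) (h2 : m' (i + 1) + k = m (i + 1))
    (h3 : ∀ j, j ≠ i → j ≠ i + 1 → m' j = m j) :
    m' + Finsupp.single (i + 1) k = m + Finsupp.single i k := by
  ext j
  simp only [Finsupp.add_apply]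
  by_cases hj1 : j = i
  · subst hj1; simp; omega
  by_cases hj2 : j = i + 1
  · subst hj2; simp; omega
  rw [Finsupp.single_eq_of_ne hj2, Finsupp.single_eq_of_ne hj1, h3 j hj1 hj2]

theorem ksw_degree (a b : ℕ) (m : ℕ →₀ ℕ) : (ksw a b m).degree = m.degree := by
  rw [ksw, Finsupp.equivMapDomain_eq_mapDomain, Finsupp.degree_mapDomain]

theorem KL.sym {γ m : ℕ →₀ ℕ} {i : ℕ} (hγ : γ (i + 1) ≤ γ i) (h : KL (ksw i (i + 1) γ) m) :
    KL (ksw i (i + 1) γ) (ksw i (i + 1) m) := by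
  refine ⟨by rw [ksw_degree, h.1], fun I => ?_⟩
  rw [← ksum_sw]
  refine (h.2 _).trans (le_of_eq ?_)
  rw [kr_max hγ, kr_max hγ, kswS_kswS, max_comm]

theorem KL.raise {γ m : ℕ →₀ ℕ} {i : ℕ} (hγ : γ (i + 1) ≤ γ i) (h : KL (ksw i (i + 1) γ) m) :
    ∃ k m', KL γ m' ∧ m' i = m i + k ∧ m' (i + 1) + k = m (i + 1) ∧
      ∀ j, j ≠ i → j ≠ i + 1 → m' j = m j := by
  classical
  have hle : ∀ I : Finset ℕ, ¬ (i + 1 ∈ I ∧ i ∉ I) → ∑ j ∈ I, m j ≤ kr γ I := by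
    intro I hI
    have := h.2 I
    rwa [kr_N hγ, kN, if_neg hI] at this
  have hex : ∃ k, ∀ I : Finset ℕ, i + 1 ∈ I → i ∉ I → ∑ j ∈ I, m j ≤ kr γ I + k := by
    refine ⟨m (i + 1), fun I h1 h2 => ?_⟩
    have a1 := hle (I.erase (i + 1)) (by simp)
    have a2 := kr_mono γ (Finset.erase_subset (i + 1) I)
    have a3 := Finset.sum_erase_add I (fun j => m j) h1
    omega
  have hk : Nat.find hex ≤ m (i + 1) := by
    apply Nat.find_min'
    intro I h1 h2
    have a1 := hle (I.erase (i + 1)) (by simp)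
    have a2 := kr_mono γ (Finset.erase_subset (i + 1) I)
    have a3 := Finset.sum_erase_add I (fun j => m j) h1
    omega
  have hspec := Nat.find_spec hex
  have hmin := fun k (hk : k < Nat.find hex) => Nat.find_min hex hk
  generalize Nat.find hex = k at hk hspec hmin
  let m' : ℕ →₀ ℕ := (m + Finsupp.single i k) - Finsupp.single (i + 1) k
  have m1 : m' i = m i + k := by simp [m']
  have m2 : m' (i + 1) + k = m (i + 1) := by simp [m']; omega
  have m3 : ∀ j, j ≠ i → j ≠ i + 1 → m' j = m j := by
    intro j hj1 hj2
    simp [m', Finsupp.single_eq_of_ne hj2, Finsupp.single_eq_of_ne hj1]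
  have hmv := kmove_mk m1 m2 m3
  refine ⟨k, m', ⟨?_, ?_⟩, m1, m2, m3⟩
  · rw [kmove_degree hmv, h.1, ksw_degree]
  · intro I
    have hs := kmove_sum hmv I
    by_cases c1 : i ∈ I <;> by_cases c2 : i + 1 ∈ I <;> simp only [c1, c2, if_true, if_false] at hs
    · have := hle I (by tauto)
      omega
    · have hI := hle I (by tauto)
      rcases Nat.eq_zero_or_pos k with h0 | h0
      · omega
      have := hmin (k - 1) (by omega)
      push Not at this
      obtain ⟨J, j1, j2, j3⟩ := this
      have sm := kr_submod γ I J
      have u1 := hle (I ∪ J) (by simp [c1])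
      have u2 := hle (I ∩ J) (by simp [c2])
      have u3 := Finset.sum_union_inter (s₁ := I) (s₂ := J) (f := fun j => m j)
      omega
    · have := hspec I c2 c1
      omega
    · have := hle I (by tauto)
      omega

theorem kmain : ∀ (α m : ℕ →₀ ℕ), (∃ T, KDem T α ∧ kwt T = m) ↔ KL α m := by
  apply kinduct
  · intro α ha m
    constructor
    · rintro ⟨T, hT, rfl⟩
      rw [KDem.base_wt ha hT]
      exact ⟨rfl, fun I => kr_ge KOrb.refl I⟩
    · intro h
      obtain ⟨T, hT, -⟩ := KDem.base_ex α ha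
      refine ⟨T, hT, ?_⟩
      rw [KDem.base_wt ha hT]
      have hle : m ≤ α := by
        intro j
        have h1 := h.2 {j}
        obtain ⟨β, b1, b2⟩ := kr_att α {j}
        rw [b1.anti ha] at b2
        simp only [Finset.sum_singleton] at h1 b2
        omega
      have e := add_tsub_cancel_of_le hle
      have e2 := congrArg Finsupp.degree e
      rw [map_add, h.1] at e2
      have e3 : (α - m).degree = 0 := by omega
      rw [Finsupp.degree_eq_zero_iff] at e3
      rw [← e, e3, add_zero]
  · intro γ i hγ ih m
    constructor
    · rintro ⟨T, hT, rfl⟩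
      obtain ⟨a1, a2, a3, a4, a5, a6⟩ := ke_iter (i := i) (T := T) (keps i T) le_rfl
      have hT' := KDem.hw hγ.le (hT.e_iter (i := i) _ le_rfl) (by omega)
      have hL := (ih _).1 ⟨_, hT', rfl⟩
      have key := kphi_keps i T
      have hmv := kmove_mk a4 a5 a6
      refine ⟨?_, fun I => ?_⟩
      · rw [← kmove_degree hmv, hL.1, ksw_degree]
      · rw [kr_N hγ.le, kN]
        split_ifs with hc
        · refine le_trans ?_ (hL.2 _)
          rw [ksum_sw]
          refine Finset.sum_le_sum fun j hj => ?_
          by_cases hj2 : j = i + 1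
          · subst hj2; rw [ksw_right]; omega
          have hj1 : j ≠ i := fun h => hc.2 (h ▸ hj)
          rw [ksw_apply, Equiv.swap_apply_of_ne_of_ne hj1 hj2, a6 j hj1 hj2]
        · have hs := kmove_sum hmv I
          have := hL.2 I
          by_cases c1 : i ∈ I <;> by_cases c2 : i + 1 ∈ I <;>
            simp only [c1, c2, if_true, if_false] at hs
          · omega
          · omega
          · tauto
          · omega
    · intro h
      have fin : ∀ (T : List (Finset ℕ)) (t : ℕ), KDem T γ → kwt T i = m i + t →
          kwt T (i + 1) + t = m (i + 1) → (∀ j, j ≠ i → j ≠ i + 1 → kwt T j = m j) →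
          t ≤ kphi i T → ∃ T, KDem T (ksw i (i + 1) γ) ∧ kwt T = m := by
        intro T t hT w1 w2 w3 ht
        have hT2 := KDem.mono (KOrb.up hγ.le) hT
        refine ⟨_, hT2.f_iter (i := i) t ht (Or.inl ?_), ?_⟩
        · rw [ksw_left, ksw_right]; exact hγ.le
        · obtain ⟨a1, a2, a3, a4, a5, a6⟩ := kf_iter (i := i) (T := T) t ht
          ext j
          by_cases hj1 : j = i
          · subst hj1; omega
          by_cases hj2 : j = i + 1
          · subst hj2; omega
          rw [a6 j hj1 hj2, w3 j hj1 hj2]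
      by_cases hm : m (i + 1) ≤ m i
      · obtain ⟨k, m', hL, m1, m2, m3⟩ := h.raise hγ.le
        obtain ⟨T, hT, rfl⟩ := (ih m').2 hL
        have key := kphi_keps i T
        exact fin T k hT m1 m2 m3 (by omega)
      · obtain ⟨k, m', hL, m1, m2, m3⟩ := (h.sym hγ.le).raise hγ.le
        obtain ⟨T, hT, rfl⟩ := (ih m').2 hL
        have key := kphi_keps i T
        rw [ksw_left] at m1
        rw [ksw_right] at m2
        refine fin T (k + (m (i + 1) - m i)) hT (by omega) (by omega) ?_ (by omega)
        intro j hj1 hj2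
        rw [m3 j hj1 hj2, ksw_apply, Equiv.swap_apply_of_ne_of_ne hj1 hj2]

theorem kKey_eq (Key : (ℕ →₀ ℕ) → MvPolynomial ℕ ℤ)
    (hbase : ∀ α : ℕ →₀ ℕ, (∀ i j : ℕ, i ≤ j → α j ≤ α i) → Key α = monomial α 1)
    (hrec : ∀ (α : ℕ →₀ ℕ) (i : ℕ), α i < α (i + 1) →
      (X i - X (i + 1)) * Key α =
        X i * Key (Finsupp.equivMapDomain (Equiv.swap i (i + 1)) α) -
          rename (Equiv.swap i (i + 1))
            (X i * Key (Finsupp.equivMapDomain (Equiv.swap i (i + 1)) α))) :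
    ∀ α, Key α = kF α := by
  apply kinduct
  · intro α ha
    rw [hbase α ha, kF_base α ha]
  · intro γ i hγ ih
    have h1 := hrec (ksw i (i + 1) γ) i (by rw [ksw_left, ksw_right]; exact hγ)
    have h2 : Finsupp.equivMapDomain (Equiv.swap i (i + 1)) (ksw i (i + 1) γ) = γ :=
      ksw_ksw i (i + 1) γ
    rw [h2, ih, ← kF_rec hγ] at h1
    refine mul_left_cancel₀ ?_ h1
    rw [sub_ne_zero]
    intro h
    have := X_injective (R := ℤ) h
    omega

/-- Every key polynomial has saturated Newton polytope: every lattice point of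
`Newton(κ_α)` is the exponent vector of a monomial with nonzero coefficient in `κ_α`. -/
theorem stmt12 (Key : (ℕ →₀ ℕ) → MvPolynomial ℕ ℤ)
    -- If `α` is weakly decreasing then `κ_α = x_1^{α_1} x_2^{α_2} ⋯` (variables are
    -- `0`-indexed: the variable `X i` is `x_{i+1}` and `α i` is `α_{i+1}`).
    (hbase : ∀ α : ℕ →₀ ℕ, (∀ i j : ℕ, i ≤ j → α j ≤ α i) → Key α = monomial α 1)
    -- If `α i < α (i+1)` then `κ_α = ∂_i (x_i κ_α̂)` where `α̂` swaps entries `i`, `i+1`: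
    -- `(xᵢ - xᵢ₊₁) ⬝ κ_α = xᵢ κ_α̂ - sᵢ ⬝ (xᵢ κ_α̂)`.
    (hrec : ∀ (α : ℕ →₀ ℕ) (i : ℕ), α i < α (i + 1) →
      (X i - X (i + 1)) * Key α =
        X i * Key (Finsupp.equivMapDomain (Equiv.swap i (i + 1)) α) -
          rename (Equiv.swap i (i + 1))
            (X i * Key (Finsupp.equivMapDomain (Equiv.swap i (i + 1)) α)))
    (α : ℕ →₀ ℕ) :
    ∀ p : ℕ → ℝ, p ∈ newtonPolytopeNat (Key α) → (∀ i, ∃ m : ℤ, p i = (m : ℝ)) →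
      ∃ d ∈ (Key α).support, p = fun i => ((d i : ℕ) : ℝ) := by
  intro p hp hpint
  rw [kKey_eq Key hbase hrec α] at hp ⊢
  set U : Finset ℕ := (kF α).support.biUnion Finsupp.support with hU
  have hsub : newtonPolytopeNat (kF α) ⊆ {q : ℕ → ℝ | (∀ j, 0 ≤ q j) ∧ (∀ j, j ∉ U → q j = 0) ∧
      (∑ j ∈ U, q j = (α.degree : ℝ)) ∧ ∀ I : Finset ℕ, ∑ j ∈ I, q j ≤ (kr α I : ℝ)} := by
    refine convexHull_min ?_ ?_
    · rintro _ ⟨d, hd, rfl⟩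
      have hd' : d ∈ (kF α).support := hd
      have hL := (kmain α d).1 (kF_support.1 hd')
      have hdU : d.support ⊆ U := Finset.subset_biUnion_of_mem Finsupp.support hd'
      refine ⟨fun j => Nat.cast_nonneg _, fun j hj => ?_, ?_, fun I => ?_⟩
      · have : d j = 0 := by
          by_contra h0
          exact hj (hdU (Finsupp.mem_support_iff.2 h0))
        simp [this]
      · rw [← hL.1, Finsupp.degree_apply, Nat.cast_sum]
        symm
        apply Finset.sum_subset hdU
        intro j _ hj
        simpa using hj
      · have := hL.2 I
        show ∑ j ∈ I, ((d j : ℕ) : ℝ) ≤ _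
        exact_mod_cast this
    · rintro x ⟨x1, x2, x3, x4⟩ y ⟨y1, y2, y3, y4⟩ a b ha hb hab
      refine ⟨fun j => ?_, fun j hj => ?_, ?_, fun I => ?_⟩
      · have := x1 j
        have := y1 j
        simp only [Pi.add_apply, Pi.smul_apply, smul_eq_mul]
        positivity
      · simp [x2 j hj, y2 j hj]
      · simp only [Pi.add_apply, Pi.smul_apply, smul_eq_mul, Finset.sum_add_distrib,
          ← Finset.mul_sum, x3, y3]
        rw [← add_mul, hab, one_mul]
      · simp only [Pi.add_apply, Pi.smul_apply, smul_eq_mul, Finset.sum_add_distrib,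
          ← Finset.mul_sum]
        calc a * ∑ j ∈ I, x j + b * ∑ j ∈ I, y j ≤ a * (kr α I : ℝ) + b * (kr α I : ℝ) :=
              add_le_add (mul_le_mul_of_nonneg_left (x4 I) ha)
                (mul_le_mul_of_nonneg_left (y4 I) hb)
          _ = (kr α I : ℝ) := by rw [← add_mul, hab, one_mul]
  obtain ⟨p1, p2, p3, p4⟩ := hsub hp
  have hnat : ∀ j, ∃ n : ℕ, p j = (n : ℝ) := by
    intro j
    obtain ⟨z, hz⟩ := hpint j
    have h0 : 0 ≤ z := by
      have := p1 j
      rw [hz] at this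
      exact_mod_cast this
    refine ⟨z.toNat, ?_⟩
    rw [hz]
    exact_mod_cast (Int.toNat_of_nonneg h0).symm
  choose n hn using hnat
  have hnU : ∀ j, n j ≠ 0 → j ∈ U := by
    intro j hj
    by_contra h0
    have := p2 j h0
    rw [hn] at this
    exact hj (by exact_mod_cast this)
  let d : ℕ →₀ ℕ := Finsupp.onFinset U n hnU
  have hd : ∀ j, d j = n j := fun j => rfl
  refine ⟨d, ?_, ?_⟩
  · rw [kF_support, kmain]
    refine ⟨?_, fun I => ?_⟩
    · have : d.degree = ∑ j ∈ U, n j := by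
        rw [Finsupp.degree_apply]
        apply Finset.sum_subset
        · intro j hj
          exact hnU j (Finsupp.mem_support_iff.1 hj)
        · intro j _ hj
          simpa using hj
      rw [this]
      simp only [hn] at p3
      exact_mod_cast p3
    · have := p4 I
      simp only [hn] at this
      simp only [hd]
      exact_mod_cast this
  · funext j
    rw [hn, hd]
end
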